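/- arXiv:math/0010259 — 3 statements merged into one kernel-verified Lean document; each statement's English description precedes it below -/
import Mathlib

section
/- (Corollary 4) For every λ ∈ ℂ and every p ≥ 1 with (λ, p) ≠ (1/2, 1), the bilinear map C^λ_p : A × A → A is not bidifferential. -/
open MvPolynomial

/-- The polynomial symbol algebra `A = ℂ[u₁,…,uₙ,ξ₁,…,ξₙ]`: variables `Sum.inl i` are the
`uᵢ` and variables `Sum.inr i` are the `ξᵢ`. -/
abbrev PolA (n : ℕ) := MvPolynomial (Fin n ⊕ Fin n) ℂ

namespace LO

/-- ξ-degree of a monomial exponent. -/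
def xiDeg {n : ℕ} (d : (Fin n ⊕ Fin n) →₀ ℕ) : ℕ :=
  ∑ i : Fin n, d (Sum.inr i)

/-- `c(E)`: the operator multiplying the ξ-degree-`m` component by `c m`. -/
noncomputable def cE {n : ℕ} (c : ℕ → ℂ) (φ : PolA n) : PolA n :=
  ∑ d ∈ φ.support, monomial d (c (xiDeg d) * coeff d φ)

/-- `D = Σᵢ ∂²/∂uᵢ∂ξᵢ`. -/
noncomputable def Dop {n : ℕ} (φ : PolA n) : PolA n :=
  ∑ i : Fin n, pderiv (Sum.inl i) (pderiv (Sum.inr i) φ)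

/-- The scalar `h^λ_d(m)`. -/
noncomputable def hScal (n : ℕ) (lam : ℂ) (d m : ℕ) : ℂ :=
  (d.factorial : ℂ)⁻¹ *
    ∏ j ∈ Finset.range d,
      ((m : ℂ) + (j : ℂ) + lam * ((n : ℂ) + 1)) /
        (2 * (m : ℂ) + (j : ℂ) + (n : ℂ) + (d : ℂ))

/-- The scalar `g^λ_d(m)`. -/
noncomputable def gScal (n : ℕ) (lam : ℂ) (d m : ℕ) : ℂ :=
  (d.factorial : ℂ)⁻¹ *
    ∏ j ∈ Finset.range d,
      (-(m : ℂ) - (j : ℂ) - lam * ((n : ℂ) + 1)) /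
        (2 * (m : ℂ) + (j : ℂ) + (n : ℂ) + 1)

/-- `bh^λ_d = h^λ_d(E) ∘ D^d` (equal to the identity for `d = 0`). -/
noncomputable def bh {n : ℕ} (lam : ℂ) (d : ℕ) (φ : PolA n) : PolA n :=
  cE (hScal n lam d) (Dop^[d] φ)

/-- `bg^λ_d = g^λ_d(E) ∘ D^d` (equal to the identity for `d = 0`). -/
noncomputable def bg {n : ℕ} (lam : ℂ) (d : ℕ) (φ : PolA n) : PolA n :=
  cE (gScal n lam d) (Dop^[d] φ)

/-- `N_k(φ,ψ) = (1/k!) Σ_{α ∈ {1,…,n}^k} ∂^kφ/∂ξ_α · ∂^kψ/∂u_α`. -/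
noncomputable def Nop {n : ℕ} (k : ℕ) (φ ψ : PolA n) : PolA n :=
  (k.factorial : ℂ)⁻¹ •
    ∑ α : Fin k → Fin n,
      ((List.ofFn α).foldr (fun i acc => pderiv (Sum.inr i) acc) φ) *
      ((List.ofFn α).foldr (fun i acc => pderiv (Sum.inl i) acc) ψ)

/-- The coefficient `C^λ_p` of the Lecomte–Ovsienko star product. -/
noncomputable def C (n : ℕ) (lam : ℂ) (p : ℕ) (φ ψ : PolA n) : PolA n :=
  ∑ i ∈ Finset.range (p + 1), ∑ j ∈ Finset.range (p + 1),
    ∑ k ∈ Finset.range (p + 1), ∑ m ∈ Finset.range (p + 1),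
      if i + j + k + m = p then bg lam m (Nop k (bh lam i φ) (bh lam j ψ)) else 0

/-- The Poisson bracket `{φ,ψ}`. -/
noncomputable def pb {n : ℕ} (φ ψ : PolA n) : PolA n :=
  ∑ i : Fin n,
    (pderiv (Sum.inr i) φ * pderiv (Sum.inl i) ψ
      - pderiv (Sum.inl i) φ * pderiv (Sum.inr i) ψ)

/-- `φ ∈ A^m` (ξ-homogeneous of degree `m`; for `m < 0` this forces `φ = 0`). -/
def IsXiHomog {n : ℕ} (m : ℤ) (φ : PolA n) : Prop :=
  ∀ d ∈ φ.support, (xiDeg d : ℤ) = m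

/-- The set of spanning momentum functions of the projective `sl_{n+1}(ℝ)`-action. -/
noncomputable def momSet (n : ℕ) : Set (PolA n) :=
  (Set.range fun i : Fin n => (X (Sum.inr i) : PolA n)) ∪
  (Set.range fun ij : Fin n × Fin n =>
    (X (Sum.inl ij.1) * X (Sum.inr ij.2) : PolA n)) ∪
  (Set.range fun i : Fin n =>
    (X (Sum.inl i) * ∑ k : Fin n, X (Sum.inl k) * X (Sum.inr k) : PolA n))

/-- The span `M` of the momentum functions. -/
noncomputable def momSpan (n : ℕ) : Submodule ℂ (PolA n) := Submodule.span ℂ (momSet n)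

/-- The Weyl algebra `W` of differential operators with polynomial coefficients,
as a subalgebra of `End_ℂ(A)`. -/
noncomputable def Weyl (n : ℕ) : Subalgebra ℂ (Module.End ℂ (PolA n)) :=
  Algebra.adjoin ℂ
    ((Set.range fun i : Fin n =>
        (LinearMap.mulLeft ℂ (X (Sum.inl i)) : Module.End ℂ (PolA n))) ∪
     (Set.range fun i : Fin n =>
        (LinearMap.mulLeft ℂ (X (Sum.inr i)) : Module.End ℂ (PolA n))) ∪
     (Set.range fun v : Fin n ⊕ Fin n =>
        ((pderiv v).toLinearMap : Module.End ℂ (PolA n))))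

/-- A bilinear map `B : A × A → A` is bidifferential if it is a finite sum
`B(φ,ψ) = Σ_α A_α(φ)·B_α(ψ)` with `A_α, B_α` in the Weyl algebra. -/
def Bidiff (n : ℕ) (B : PolA n → PolA n → PolA n) : Prop :=
  ∃ (N : ℕ) (Aop Bop : Fin N → Weyl n),
    ∀ φ ψ : PolA n,
      B φ ψ = ∑ α : Fin N,
        (Aop α : Module.End ℂ (PolA n)) φ * (Bop α : Module.End ℂ (PolA n)) ψ

/-- The scalar by which `T_p = ∏_{i=1}^{⌊p/2⌋}(E'+i)` acts on `A^m`. -/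
noncomputable def TScal (n p m : ℕ) : ℂ :=
  ∏ i ∈ Finset.Icc 1 (p / 2), ((m : ℂ) + (n : ℂ) / 2 + (i : ℂ))

/-- The scalar by which `S_p = ∏_{i=1}^{⌊p/2⌋}(E'−i)` acts on `A^m`. -/
noncomputable def SScal (n p m : ℕ) : ℂ :=
  ∏ i ∈ Finset.Icc 1 (p / 2), ((m : ℂ) + (n : ℂ) / 2 - (i : ℂ))

/-- The operator `T_p`. -/
noncomputable def Tp (n p : ℕ) : PolA n → PolA n := cE (TScal n p)

/-- The operator `S_p`. -/
noncomputable def Sp (n p : ℕ) : PolA n → PolA n := cE (SScal n p)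

/-- The fiberwise Euler operator `E = Σ ξᵢ ∂/∂ξᵢ` as an endomorphism. -/
noncomputable def Elin (n : ℕ) : Module.End ℂ (PolA n) :=
  ∑ i : Fin n,
    (LinearMap.mulLeft ℂ (X (Sum.inr i)) : Module.End ℂ (PolA n)) ∘ₗ
      (pderiv (Sum.inr i)).toLinearMap

/-- `E' = E + n/2` as an endomorphism. -/
noncomputable def E'lin (n : ℕ) : Module.End ℂ (PolA n) :=
  Elin n + ((n : ℂ) / 2) • 1

/-- `D` as an endomorphism. -/
noncomputable def Dlin (n : ℕ) : Module.End ℂ (PolA n) :=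
  ∑ i : Fin n,
    ((pderiv (Sum.inl i)).toLinearMap : Module.End ℂ (PolA n)) ∘ₗ
      (pderiv (Sum.inr i)).toLinearMap

/-- `L^{(m)} = −(1/16)(ξ_m∘D − 2E'∘∂/∂u_m)∘D`. -/
noncomputable def Lop (n : ℕ) (m : Fin n) : Module.End ℂ (PolA n) :=
  (-(1 / 16 : ℂ)) •
    (((LinearMap.mulLeft ℂ (X (Sum.inr m)) : Module.End ℂ (PolA n)) ∘ₗ Dlin n
        - (2 : ℂ) • (E'lin n ∘ₗ (pderiv (Sum.inl m)).toLinearMap)) ∘ₗ Dlin n)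

end LO

open Finset in
theorem aux_erase (m i : ℕ) :
    ∏ j ∈ (range (m + i + 1)).erase m, ((m : ℂ) - (j : ℂ)) =
      (-1) ^ i * (m.factorial : ℂ) * (i.factorial : ℂ) := by
  induction i with
  | zero =>
    have : (range (m + 0 + 1)).erase m = range m := by ext a; simp; omega
    rw [this, ← Finset.prod_range_reflect, ← Finset.prod_range_add_one_eq_factorial]
    push_cast
    simp only [pow_zero, one_mul, Nat.factorial_zero, Nat.cast_one, mul_one]
    refine Finset.prod_congr rfl fun j hj => ?_
    rw [Finset.mem_range] at hj
    obtain ⟨k, rfl⟩ := Nat.exists_eq_add_of_lt hj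
    have : j + k + 1 - 1 - j = k := by omega
    rw [this]; push_cast; ring
  | succ i ih =>
    have : (range (m + (i + 1) + 1)).erase m = insert (m + i + 1) ((range (m + i + 1)).erase m) := by
      ext a; simp; omega
    rw [this, Finset.prod_insert (by simp), ih, Nat.factorial_succ]
    push_cast; ring

theorem aux_sgn (m i : ℕ) : ((-1 : ℂ) ^ i)⁻¹ = (-1) ^ (m + i) * (-1) ^ m := by
  rw [← inv_pow, pow_add]
  have : ((-1 : ℂ) ^ m) * (-1) ^ m = 1 := by rw [← mul_pow]; simp
  have h2 : (-1 : ℂ)⁻¹ = -1 := by norm_num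
  rw [h2]
  linear_combination (-(-1 : ℂ) ^ i) * this

open Finset in
theorem aux_A (q : ℕ) (x : ℂ) :
    ∑ m ∈ range (q + 2), (-1 : ℂ) ^ m / ((m.factorial : ℂ) * ((q + 1 - m).factorial : ℂ)) *
      ((m : ℂ) * ∏ r ∈ range q, (x + m + 1 + r)) = (-1) ^ (q + 1) := by
  let P : Polynomial ℂ := Polynomial.X * ∏ r ∈ range q, (Polynomial.X + Polynomial.C (x + 1 + r))
  have hm : (∏ r ∈ range q, (Polynomial.X + Polynomial.C (x + 1 + r))).Monic :=
    Polynomial.monic_prod_of_monic _ _ fun i _ => Polynomial.monic_X_add_C _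
  have hP : P.Monic := Polynomial.monic_X.mul hm
  have hd : P.natDegree = q + 1 := by
    rw [Polynomial.Monic.natDegree_mul Polynomial.monic_X hm,
      Polynomial.natDegree_prod_of_monic _ _ (fun i _ => Polynomial.monic_X_add_C _)]
    simp only [Polynomial.natDegree_X_add_C, Polynomial.natDegree_X]; simp [add_comm]
  have key := Lagrange.leadingCoeff_eq_sum (s := range (q + 2)) (v := fun i : ℕ => (i : ℂ))
    (fun a _ b _ h => by simpa using h) (P := P) (by
      rw [Polynomial.degree_eq_natDegree hP.ne_zero, hd]; simp; rfl)
  rw [hP.leadingCoeff] at key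
  refine Eq.trans ?_ ((congrArg (fun z => (-1 : ℂ) ^ (q + 1) * z) key.symm).trans (mul_one _))
  rw [Finset.mul_sum]
  refine Finset.sum_congr rfl fun m hmm => ?_
  obtain ⟨i, hi⟩ := Nat.exists_eq_add_of_le (Nat.lt_succ_iff.mp (Finset.mem_range.mp hmm))
  have e1 : q + 1 - m = i := by omega
  have e2 : q + 2 = m + i + 1 := by omega
  rw [e1, e2, aux_erase, hi]
  have e3 : P.eval (m : ℂ) = (m : ℂ) * ∏ r ∈ range q, (x + m + 1 + r) := by
    simp only [P, Polynomial.eval_mul, Polynomial.eval_X, Polynomial.eval_prod,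
      Polynomial.eval_add, Polynomial.eval_C]
    congr 1; refine Finset.prod_congr rfl fun r _ => by ring
  rw [e3, div_eq_mul_inv, div_eq_mul_inv, mul_inv, mul_inv, mul_inv, aux_sgn m i]
  have : ((-1 : ℂ) ^ (m + i)) * (-1) ^ (m + i) = 1 := by rw [← mul_pow]; simp
  linear_combination (-(-1 : ℂ) ^ m * ((m.factorial : ℂ))⁻¹ * ((i.factorial : ℂ))⁻¹ *
    ((m : ℂ) * ∏ r ∈ range q, (x + m + 1 + r))) * this

open Finset in
theorem aux_B (q : ℕ) (x t : ℂ) (ht : ∀ m : ℕ, t + m ≠ 0) :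
    ∑ m ∈ range (q + 1), (-1 : ℂ) ^ m / ((m.factorial : ℂ) * ((q - m).factorial : ℂ)) *
      ((∏ j ∈ range (q + 1), (t + j)) / (t + m) * ∏ r ∈ range (q + 1), (x + m + 1 + r)) =
    ∏ r ∈ range (q + 1), (x - t + 1 + r) + (-1) ^ q * ∏ j ∈ range (q + 1), (t + j) := by
  let Q : Polynomial ℂ := ∏ r ∈ range (q + 1), (Polynomial.X + Polynomial.C (x + 1 + r))
  let v : ℕ → ℂ := fun i => (i : ℂ)
  have hv : Set.InjOn v (range (q + 1)) := fun a _ b _ h => by simpa [v] using h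
  have hQ : Q.Monic :=
    Polynomial.monic_prod_of_monic _ _ fun i _ => Polynomial.monic_X_add_C _
  have hd : Q.natDegree = q + 1 := by
    rw [Polynomial.natDegree_prod_of_monic _ _ (fun i _ => Polynomial.monic_X_add_C _)]
    simp only [Polynomial.natDegree_X_add_C]; simp
  have hdeg : Q.degree = ((q + 1 : ℕ) : WithBot ℕ) := by
    rw [Polynomial.degree_eq_natDegree hQ.ne_zero, hd]
  have hN : (Lagrange.nodal (range (q + 1)) v).Monic := Lagrange.nodal_monic
  have hNd : (Lagrange.nodal (range (q + 1)) v).degree = ((q + 1 : ℕ) : WithBot ℕ) := by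
    rw [Lagrange.degree_nodal]; simp
  have hlt : (Q - Lagrange.nodal (range (q + 1)) v).degree < #(range (q + 1)) := by
    have := Polynomial.degree_sub_lt_left (hdeg.trans hNd.symm) hQ.ne_zero
      (hQ.leadingCoeff.trans hN.leadingCoeff.symm)
    rw [hdeg] at this; simpa using this
  have key := Lagrange.eq_interpolate hv hlt
  have key2 := congrArg (Polynomial.eval (-t)) key
  rw [Lagrange.eval_interpolate_not_at_node _ (by
    intro i _ h
    apply ht i
    have : -t = (i : ℂ) := h
    rw [← this]; ring)] at key2
  have hNe : (Lagrange.nodal (range (q + 1)) v).eval (-t) =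
      (-1) ^ (q + 1) * ∏ j ∈ range (q + 1), (t + j) := by
    rw [Lagrange.eval_nodal]
    have : ((-1 : ℂ)) ^ (q + 1) = ∏ j ∈ range (q + 1), (-1 : ℂ) := by simp
    rw [this, ← Finset.prod_mul_distrib]
    refine Finset.prod_congr rfl fun r _ => by simp only [v]; ring
  rw [Polynomial.eval_sub, hNe] at key2
  have hQe : ∀ y : ℂ, Q.eval y = ∏ r ∈ range (q + 1), (x + y + 1 + r) := by
    intro y
    simp only [Q, Polynomial.eval_prod, Polynomial.eval_add, Polynomial.eval_X, Polynomial.eval_C]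
    refine Finset.prod_congr rfl fun r _ => by ring
  have : ∏ r ∈ range (q + 1), (x - t + 1 + r) = Q.eval (-t) := by
    rw [hQe]; rfl
  rw [this]
  have e0 : Q.eval (-t) + (-1) ^ q * ∏ j ∈ range (q + 1), (t + j) =
    Q.eval (-t) - (-1) ^ (q + 1) * ∏ j ∈ range (q + 1), (t + j) := by ring
  rw [e0, key2, Finset.mul_sum]
  refine Finset.sum_congr rfl fun m hmm => ?_
  have hz : (Lagrange.nodal (range (q + 1)) v).eval (v m) = 0 :=
    Lagrange.eval_nodal_at_node hmm
  rw [Polynomial.eval_sub, hz, sub_zero, Lagrange.nodalWeight, Finset.prod_inv_distrib]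
  obtain ⟨i, hi⟩ := Nat.exists_eq_add_of_le (Nat.lt_succ_iff.mp (Finset.mem_range.mp hmm))
  have e1 : q - m = i := by omega
  have e2 : ∏ j ∈ (range (q + 1)).erase m, (v m - v j) =
      (-1) ^ i * (m.factorial : ℂ) * (i.factorial : ℂ) := by rw [hi]; exact aux_erase m i
  rw [e2, e1, hQe]
  have e3 : (-t - v m)⁻¹ = -(t + m)⁻¹ := by
    rw [← inv_neg]; congr 1; simp only [v]; ring
  rw [e3, div_eq_mul_inv, div_eq_mul_inv, mul_inv, mul_inv, mul_inv, aux_sgn m i, pow_succ, hi]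
  have : ((-1 : ℂ) ^ (m + i)) * (-1) ^ (m + i) = 1 := by rw [← mul_pow]; simp
  simp only [v]
  generalize ∏ j ∈ range (m + i + 1), (t + (j : ℂ)) = a
  generalize ∏ r ∈ range (m + i + 1), (x + (m : ℂ) + 1 + r) = b
  linear_combination (-(-1 : ℂ) ^ m * ((m.factorial : ℂ))⁻¹ * ((i.factorial : ℂ))⁻¹ *
    a * b * (t + m)⁻¹) * this

open Finset in
theorem aux_g (n : ℕ) (lam : ℂ) (m s : ℕ) :
    LO.gScal n lam m s * ∏ r ∈ range m, (2 * (s : ℂ) + n + 1 + r) =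
      (-1) ^ m * (m.factorial : ℂ)⁻¹ * ∏ j ∈ range m, ((s : ℂ) + lam * (n + 1) + j) := by
  unfold LO.gScal
  rw [mul_assoc, ← Finset.prod_mul_distrib]
  have : ((-1 : ℂ)) ^ m = ∏ j ∈ range m, (-1 : ℂ) := by simp
  rw [this, mul_comm (∏ j ∈ range m, (-1 : ℂ)), mul_assoc, ← Finset.prod_mul_distrib]
  congr 1
  refine Finset.prod_congr rfl fun r _ => ?_
  have h0 : (2 * (s : ℂ) + r + n + 1) ≠ 0 := by
    have : (2 * (s : ℂ) + r + n + 1) = ((2 * s + r + n + 1 : ℕ) : ℂ) := by push_cast; ring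
    rw [this]; exact Nat.cast_ne_zero.mpr (by omega)
  rw [show (2 * (s : ℂ) + n + 1 + r) = (2 * (s : ℂ) + r + n + 1) by ring, div_mul_cancel₀ _ h0]
  ring

open Finset in
theorem aux_h (n : ℕ) (lam : ℂ) (i s : ℕ) (hs : 0 < s + i + n) :
    LO.hScal n lam i s * ∏ r ∈ range i, (2 * (s : ℂ) + n + i + r) =
      (i.factorial : ℂ)⁻¹ * ∏ j ∈ range i, ((s : ℂ) + lam * (n + 1) + j) := by
  unfold LO.hScal
  rw [mul_assoc, ← Finset.prod_mul_distrib]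
  congr 1
  refine Finset.prod_congr rfl fun r _ => ?_
  have h0 : (2 * (s : ℂ) + r + n + i) ≠ 0 := by
    have : (2 * (s : ℂ) + r + n + i) = ((2 * s + r + n + i : ℕ) : ℂ) := by push_cast; ring
    rw [this]; exact Nat.cast_ne_zero.mpr (by omega)
  rw [show (2 * (s : ℂ) + n + i + r) = (2 * (s : ℂ) + r + n + i) by ring, div_mul_cancel₀ _ h0]
  ring

open Finset in
theorem aux_gh1 (n : ℕ) (hn : 1 ≤ n) (lam : ℂ) (q m i s : ℕ) (h : q + 1 = m + i) :
    LO.gScal n lam m s * LO.hScal n lam i (s + m) *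
      ∏ r ∈ range (2 * q + 1), (2 * (s : ℂ) + n + 1 + r) =
    (-1) ^ m / ((m.factorial : ℂ) * (i.factorial : ℂ)) *
      ((∏ j ∈ range (q + 1), ((s : ℂ) + lam * (n + 1) + j)) *
        ∏ r ∈ range q, (2 * (s : ℂ) + n + m + 1 + r)) := by
  have e : 2 * q + 1 = m + q + i := by omega
  rw [e, Finset.prod_range_add, Finset.prod_range_add, h, Finset.prod_range_add]
  have hg := aux_g n lam m s
  have hh := aux_h n lam i (s + m) (by omega)
  have c1 : ∏ r ∈ range i, (2 * (s : ℂ) + n + 1 + ((m + q + r : ℕ) : ℂ)) =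
      ∏ r ∈ range i, (2 * ((s + m : ℕ) : ℂ) + n + i + r) := by
    refine Finset.prod_congr rfl fun r _ => ?_
    have : (q : ℂ) + 1 = m + i := by exact_mod_cast h
    push_cast; linear_combination this
  have c2 : ∏ r ∈ range q, (2 * (s : ℂ) + n + 1 + ((m + r : ℕ) : ℂ)) =
      ∏ r ∈ range q, (2 * (s : ℂ) + n + m + 1 + r) := by
    refine Finset.prod_congr rfl fun r _ => ?_
    push_cast; ring
  have c3 : ∏ r ∈ range i, ((s : ℂ) + lam * (n + 1) + ((m + r : ℕ) : ℂ)) =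
      ∏ r ∈ range i, (((s + m : ℕ) : ℂ) + lam * (n + 1) + r) := by
    refine Finset.prod_congr rfl fun r _ => ?_
    push_cast; ring
  rw [c1, c2, c3, div_eq_mul_inv, mul_inv]
  rw [show ∀ a b c d e : ℂ, a * b * (c * d * e) = (a * c) * (b * e) * d by intros; ring, hg, hh]
  ring

open Finset in
theorem aux_gh2 (n : ℕ) (hn : 1 ≤ n) (lam : ℂ) (q m i s : ℕ) (h : q = m + i)
    (ht : ∀ m : ℕ, (s : ℂ) + lam * (n + 1) + m ≠ 0) :
    LO.gScal n lam m s * LO.hScal n lam i (s + 1 + m) *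
      ∏ r ∈ range (2 * q + 1), (2 * (s : ℂ) + n + 1 + r) =
    (-1) ^ m / ((m.factorial : ℂ) * (i.factorial : ℂ)) *
      ((∏ j ∈ range (q + 1), ((s : ℂ) + lam * (n + 1) + j)) / ((s : ℂ) + lam * (n + 1) + m) *
        ∏ r ∈ range (q + 1), (2 * (s : ℂ) + n + m + 1 + r)) := by
  have e : 2 * q + 1 = m + (q + 1) + i := by omega
  have e' : ∏ j ∈ range (q + 1), ((s : ℂ) + lam * (n + 1) + j) =
    ∏ j ∈ range (m + 1 + i), ((s : ℂ) + lam * (n + 1) + j) := by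
    rw [show q + 1 = m + 1 + i by omega]
  rw [e, e', Finset.prod_range_add, Finset.prod_range_add, Finset.prod_range_add _ (m + 1) i,
    Finset.prod_range_succ _ m]
  have hg := aux_g n lam m s
  have hh := aux_h n lam i (s + 1 + m) (by omega)
  have c1 : ∏ r ∈ range i, (2 * (s : ℂ) + n + 1 + ((m + (q + 1) + r : ℕ) : ℂ)) =
      ∏ r ∈ range i, (2 * ((s + 1 + m : ℕ) : ℂ) + n + i + r) := by
    refine Finset.prod_congr rfl fun r _ => ?_
    have : (q : ℂ) = m + i := by exact_mod_cast h
    push_cast; linear_combination this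
  have c2 : ∏ r ∈ range (q + 1), (2 * (s : ℂ) + n + 1 + ((m + r : ℕ) : ℂ)) =
      ∏ r ∈ range (q + 1), (2 * (s : ℂ) + n + m + 1 + r) := by
    refine Finset.prod_congr rfl fun r _ => ?_
    push_cast; ring
  have c3 : ∏ r ∈ range i, ((s : ℂ) + lam * (n + 1) + ((m + 1 + r : ℕ) : ℂ)) =
      ∏ r ∈ range i, (((s + 1 + m : ℕ) : ℂ) + lam * (n + 1) + r) := by
    refine Finset.prod_congr rfl fun r _ => ?_
    push_cast; ring
  rw [c1, c2, c3, div_eq_mul_inv, mul_inv]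
  rw [show ∀ a b c d e : ℂ, a * b * (c * d * e) = (a * c) * (b * e) * d by intros; ring, hg, hh]
  rw [show ∀ a b c d : ℂ, a * b * c / d = a * c * (b / d) by intros; ring, div_self (ht m)]
  ring

/-- The scalar `K`. -/
noncomputable def Kscal (n : ℕ) (lam : ℂ) (q s : ℕ) : ℂ :=
  ∑ m ∈ Finset.range (q + 2), (m : ℂ) * (LO.gScal n lam m s * LO.hScal n lam (q + 1 - m) (s + m)) +
  ∑ m ∈ Finset.range (q + 1), LO.gScal n lam m s * LO.hScal n lam (q - m) (s + 1 + m)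

open Finset in
theorem aux_K (n : ℕ) (hn : 1 ≤ n) (lam : ℂ) (q s : ℕ)
    (ht : ∀ m : ℕ, (s : ℂ) + lam * (n + 1) + m ≠ 0) :
    Kscal n lam q s * ∏ r ∈ range (2 * q + 1), (2 * (s : ℂ) + n + 1 + r) =
      ∏ r ∈ range (q + 1), ((s : ℂ) + n - lam * (n + 1) + 1 + r) := by
  unfold Kscal
  rw [add_mul, Finset.sum_mul, Finset.sum_mul]
  have h1 : ∀ m ∈ range (q + 2),
      (m : ℂ) * (LO.gScal n lam m s * LO.hScal n lam (q + 1 - m) (s + m)) *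
        ∏ r ∈ range (2 * q + 1), (2 * (s : ℂ) + n + 1 + r) =
      (∏ j ∈ range (q + 1), ((s : ℂ) + lam * (n + 1) + j)) *
        ((-1 : ℂ) ^ m / ((m.factorial : ℂ) * ((q + 1 - m).factorial : ℂ)) *
      ((m : ℂ) * ∏ r ∈ range q, (2 * (s : ℂ) + n + m + 1 + r))) := by
    intro m hm
    rw [Finset.mem_range] at hm
    rw [mul_assoc, aux_gh1 n hn lam q m (q + 1 - m) s (by omega)]
    ring
  have h2 := fun m (hm : m ∈ range (q + 1)) =>
    aux_gh2 n hn lam q m (q - m) s (by rw [Finset.mem_range] at hm; omega) ht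
  rw [Finset.sum_congr rfl h1, Finset.sum_congr rfl h2, ← Finset.mul_sum, aux_A, aux_B q _ _ ht]
  have h3 : ∀ r : ℕ, (2 * (s : ℂ) + n - (s + lam * (n + 1)) + 1 + r) =
    ((s : ℂ) + n - lam * (n + 1) + 1 + r) := by intro r; ring
  simp only [h3]
  ring

/-! ### Sequences of polynomials obtained by applying differential operators to `ξ^b`. -/

/-- Generating sequences. -/
noncomputable def eSeq {n : ℕ} (z : Fin n) (k : ℕ) : ℕ → PolA n :=
  fun b => monomial (Finsupp.single (Sum.inr z) (b - k)) (b.descFactorial k : ℂ)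

/-- The module of sequences. -/
noncomputable def SSeq {n : ℕ} (z : Fin n) : Submodule (PolA n) (ℕ → PolA n) :=
  Submodule.span (PolA n) (Set.range (eSeq z))

theorem SSeq_pderiv {n : ℕ} (z : Fin n) (v : Fin n ⊕ Fin n) (f : ℕ → PolA n) (hf : f ∈ SSeq z) :
    (fun b => pderiv v (f b)) ∈ SSeq z := by
  induction hf using Submodule.span_induction with
  | mem x h =>
    obtain ⟨k, rfl⟩ := h
    by_cases hv : v = Sum.inr z
    · subst hv
      have : (fun b => pderiv (Sum.inr z) (eSeq z k b)) = eSeq z (k + 1) := by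
        funext b
        simp only [eSeq, pderiv_monomial_single]
        rw [Nat.descFactorial_succ, Nat.sub_sub]
        push_cast; rw [mul_comm]
      rw [this]
      exact Submodule.subset_span ⟨_, rfl⟩
    · have : (fun b => pderiv v (eSeq z k b)) = 0 := by
        funext b
        simp only [eSeq, pderiv_monomial]
        rw [Finsupp.single_eq_of_ne hv]; simp
      rw [this]; exact Submodule.zero_mem _
  | zero => 
    have : (fun b => pderiv v ((0 : ℕ → PolA n) b)) = 0 := by funext b; simp
    rw [this]; exact Submodule.zero_mem _
  | add x y hx hy h1 h2 =>
    have : (fun b => pderiv v ((x + y) b)) = (fun b => pderiv v (x b)) + fun b => pderiv v (y b) := by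
      funext b; simp
    rw [this]; exact Submodule.add_mem _ h1 h2
  | smul a x hx h1 =>
    have : (fun b => pderiv v ((a • x) b)) = a • (fun b => pderiv v (x b)) + (pderiv v a) • x := by
      funext b; simp [mul_comm]
    rw [this]
    exact Submodule.add_mem _ (Submodule.smul_mem _ _ h1) (Submodule.smul_mem _ _ hx)

theorem SSeq_weyl {n : ℕ} (z : Fin n) (T : Module.End ℂ (PolA n)) (hT : T ∈ LO.Weyl n) :
    ∀ f ∈ SSeq z, (fun b => T (f b)) ∈ SSeq z := by
  unfold LO.Weyl at hT
  induction hT using Algebra.adjoin_induction with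
  | mem x hx =>
    intro f hf
    rcases hx with (⟨i, rfl⟩ | ⟨i, rfl⟩) | ⟨v, rfl⟩
    · exact Submodule.smul_mem _ (X (Sum.inl i)) hf
    · exact Submodule.smul_mem _ (X (Sum.inr i)) hf
    · exact SSeq_pderiv z v f hf
  | algebraMap r =>
    intro f hf
    have : (fun b => (algebraMap ℂ (Module.End ℂ (PolA n)) r) (f b)) = (MvPolynomial.C r : PolA n) • f := by
      funext b
      simp [Module.algebraMap_end_apply, MvPolynomial.smul_eq_C_mul]
    rw [this]; exact Submodule.smul_mem _ _ hf
  | add x y _ _ h1 h2 =>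
    intro f hf
    exact Submodule.add_mem _ (h1 f hf) (h2 f hf)
  | mul x y _ _ h1 h2 =>
    intro f hf
    exact h1 _ (h2 f hf)

/-- The coefficient property. -/
def CoefProp {n : ℕ} (z : Fin n) (f : ℕ → PolA n) : Prop :=
  ∀ q : ℕ, ∃ P : Polynomial ℂ, ∀ b : ℕ, q ≤ b →
    coeff (Finsupp.single (Sum.inr z) (b - q)) (f b) = (b.descFactorial q : ℂ) * P.eval (b : ℂ)

theorem CoefProp.add {n : ℕ} {z : Fin n} {f g : ℕ → PolA n} (hf : CoefProp z f)
    (hg : CoefProp z g) : CoefProp z (f + g) := by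
  intro q
  obtain ⟨P, hP⟩ := hf q
  obtain ⟨Q, hQ⟩ := hg q
  refine ⟨P + Q, fun b hb => ?_⟩
  simp only [Pi.add_apply, coeff_add, hP b hb, hQ b hb, Polynomial.eval_add]
  ring

theorem CoefProp.mulX {n : ℕ} {z : Fin n} {f : ℕ → PolA n} (hf : CoefProp z f)
    (v : Fin n ⊕ Fin n) : CoefProp z ((X v : PolA n) • f) := by
  classical
  intro q
  by_cases hv : v = Sum.inr z
  · subst hv
    obtain ⟨P, hP⟩ := hf (q + 1)
    refine ⟨(Polynomial.X - Polynomial.C (q : ℂ)) * P, fun b hb => ?_⟩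
    simp only [Pi.smul_apply, smul_eq_mul]
    rw [mul_comm, coeff_mul_X']
    rcases Nat.eq_or_lt_of_le hb with h | h
    · subst h; simp
    · have e : Finsupp.single (Sum.inr z : Fin n ⊕ Fin n) (b - q) - Finsupp.single (Sum.inr z) 1 =
        Finsupp.single (Sum.inr z) (b - (q + 1)) := by
        rw [← Finsupp.single_tsub]; rfl
      rw [if_pos (by simp; omega), e, hP b h, Nat.descFactorial_succ]
      push_cast [Nat.cast_sub hb]
      simp
      ring
  · refine ⟨0, fun b hb => ?_⟩
    simp only [Pi.smul_apply, smul_eq_mul]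
    rw [mul_comm, coeff_mul_X', if_neg]
    · simp
    · simp [Finsupp.single_eq_of_ne hv]

theorem CoefProp.smul {n : ℕ} {z : Fin n} {f : ℕ → PolA n} (hf : CoefProp z f)
    (a : PolA n) : CoefProp z (a • f) := by
  induction a using MvPolynomial.induction_on with
  | C r =>
    intro q
    obtain ⟨P, hP⟩ := hf q
    refine ⟨Polynomial.C r * P, fun b hb => ?_⟩
    simp only [Pi.smul_apply, smul_eq_mul, coeff_C_mul, hP b hb, Polynomial.eval_mul,
      Polynomial.eval_C]
    ring
  | add p q hp hq => rw [add_smul]; exact hp.add hq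
  | mul_X p v hp => rw [mul_comm, mul_smul]; exact hp.mulX v

theorem SSeq_coef {n : ℕ} (z : Fin n) (f : ℕ → PolA n) (hf : f ∈ SSeq z) : CoefProp z f := by
  classical
  induction hf using Submodule.span_induction with
  | mem x h =>
    obtain ⟨k, rfl⟩ := h
    intro q
    by_cases hk : k = q
    · subst hk
      exact ⟨1, fun b hb => by simp [eSeq]⟩
    · refine ⟨0, fun b hb => ?_⟩
      simp only [eSeq, coeff_monomial, Polynomial.eval_zero, mul_zero]
      by_cases hkb : k ≤ b
      · rw [if_neg]
        intro h
        have := Finsupp.single_injective _ h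
        omega
      · rw [Nat.descFactorial_eq_zero_iff_lt.mpr (by omega)]; simp
  | zero => exact fun q => ⟨0, fun b hb => by simp⟩
  | add x y hx hy h1 h2 => exact h1.add h2
  | smul a x hx h1 => exact h1.smul a

/-! ### Computation of `C` on special arguments. -/

theorem sum_collapse_aux {G : Type*} [AddCommMonoid G] (q : ℕ) (T : ℕ → ℕ → ℕ → ℕ → G)
    (h1 : ∀ i j k m, T i (j + 1) k m = 0) (h2 : ∀ i k m, T i 0 (k + 2) m = 0) :
    (∑ i ∈ Finset.range (q + 1 + 1), ∑ j ∈ Finset.range (q + 1 + 1),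
      ∑ k ∈ Finset.range (q + 1 + 1), ∑ m ∈ Finset.range (q + 1 + 1),
        if i + j + k + m = q + 1 then T i j k m else 0) =
    ∑ m ∈ Finset.range (q + 2), T (q + 1 - m) 0 0 m +
      ∑ m ∈ Finset.range (q + 1), T (q - m) 0 1 m := by
  have e1 : ∀ i, (∑ j ∈ Finset.range (q + 1 + 1),
      ∑ k ∈ Finset.range (q + 1 + 1), ∑ m ∈ Finset.range (q + 1 + 1),
        if i + j + k + m = q + 1 then T i j k m else 0) =
      (∑ m ∈ Finset.range (q + 2), if i + m = q + 1 then T i 0 0 m else 0) +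
      (∑ m ∈ Finset.range (q + 2), if i + m = q then T i 0 1 m else 0) := by
    intro i
    rw [Finset.sum_range_succ', Finset.sum_eq_zero (by intro j _; simp [h1]), zero_add,
      Finset.sum_range_succ', Finset.sum_range_succ', Finset.sum_eq_zero (by intro j _; simp [h2]),
      zero_add, add_comm]
    congr 1
    refine Finset.sum_congr rfl fun m _ => ?_
    have : i + 0 + (0 + 1) + m = q + 1 ↔ i + m = q := by omega
    simp only [this]
  rw [Finset.sum_congr rfl fun i _ => e1 i, Finset.sum_add_distrib, Finset.sum_comm]
  congr 1
  · refine Finset.sum_congr rfl fun m hm => ?_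
    rw [Finset.mem_range] at hm
    rw [Finset.sum_eq_single (q + 1 - m)]
    · rw [if_pos (by omega)]
    · intro i _ hi; rw [if_neg (by omega)]
    · intro hi; exact absurd (Finset.mem_range.mpr (by omega)) hi
  · rw [Finset.sum_comm, Finset.sum_range_succ,
      Finset.sum_eq_zero (s := Finset.range (q + 1 + 1)) (by intro i _; rw [if_neg (by omega)]),
      add_zero]
    refine Finset.sum_congr rfl fun m hm => ?_
    rw [Finset.mem_range] at hm
    rw [Finset.sum_eq_single (q - m)]
    · rw [if_pos (by omega)]
    · intro i _ hi; rw [if_neg (by omega)]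
    · intro hi; exact absurd (Finset.mem_range.mpr (by omega)) hi

/-- The monomial `r u^a ξ^c`. -/
noncomputable def Mo {n : ℕ} (z : Fin n) (a c : ℕ) (r : ℂ) : PolA n :=
  monomial (Finsupp.single (Sum.inl z) a + Finsupp.single (Sum.inr z) c) r

theorem Mo_zero {n : ℕ} (z : Fin n) (a c : ℕ) : Mo z a c 0 = 0 := by simp [Mo]

theorem pderiv_inl_Mo {n : ℕ} (z i : Fin n) (a c : ℕ) (r : ℂ) :
    pderiv (Sum.inl i) (Mo z a c r) = if i = z then Mo z (a - 1) c (r * a) else 0 := by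
  classical
  unfold Mo
  rw [pderiv_monomial]
  split_ifs with h
  · subst h
    congr 1
    · congr 1
      ext v
      rcases v with v | v <;> simp [Finsupp.single_apply]
    · simp
  · rw [Finsupp.add_apply, Finsupp.single_eq_of_ne (by simpa using h),
      Finsupp.single_eq_of_ne (by simp)]
    simp

theorem pderiv_inr_Mo {n : ℕ} (z i : Fin n) (a c : ℕ) (r : ℂ) :
    pderiv (Sum.inr i) (Mo z a c r) = if i = z then Mo z a (c - 1) (r * c) else 0 := by
  classical
  unfold Mo
  rw [pderiv_monomial]
  split_ifs with h
  · subst h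
    congr 1
    · congr 1
      ext v
      rcases v with v | v <;> simp [Finsupp.single_apply]
    · simp
  · rw [Finsupp.add_apply, Finsupp.single_eq_of_ne (by simp),
      Finsupp.single_eq_of_ne (by simpa using h)]
    simp

theorem Dop_Mo {n : ℕ} (z : Fin n) (a c : ℕ) (r : ℂ) :
    LO.Dop (Mo z a c r) = Mo z (a - 1) (c - 1) (r * c * a) := by
  unfold LO.Dop
  rw [Finset.sum_eq_single z]
  · rw [pderiv_inr_Mo, if_pos rfl, pderiv_inl_Mo, if_pos rfl]
  · intro i _ hi
    rw [pderiv_inr_Mo, if_neg hi, map_zero]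
  · simp

theorem Dop_iter_Mo {n : ℕ} (z : Fin n) (a c : ℕ) (r : ℂ) (k : ℕ) :
    LO.Dop^[k] (Mo z a c r) =
      Mo z (a - k) (c - k) (r * (a.descFactorial k : ℂ) * (c.descFactorial k : ℂ)) := by
  induction k with
  | zero => simp
  | succ k ih =>
    rw [Function.iterate_succ_apply', ih, Dop_Mo, Nat.descFactorial_succ, Nat.descFactorial_succ,
      Nat.sub_sub, Nat.sub_sub]
    congr 1
    push_cast
    ring

theorem cE_Mo {n : ℕ} (z : Fin n) (f : ℕ → ℂ) (a c : ℕ) (r : ℂ) :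
    LO.cE f (Mo z a c r) = Mo z a c (f c * r) := by
  classical
  have hx : LO.xiDeg (Finsupp.single (Sum.inl z : Fin n ⊕ Fin n) a +
      Finsupp.single (Sum.inr z) c) = c := by
    simp [LO.xiDeg, Finsupp.single_apply]
  unfold LO.cE Mo
  by_cases hr : r = 0
  · subst hr; simp
  · rw [support_monomial, if_neg hr, Finset.sum_singleton, hx, coeff_monomial, if_pos rfl]

theorem cE_zero' {n : ℕ} (f : ℕ → ℂ) : LO.cE f (0 : PolA n) = 0 := by
  simp [LO.cE]

theorem bh_Mo {n : ℕ} (z : Fin n) (lam : ℂ) (d a c : ℕ) (r : ℂ) :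
    LO.bh lam d (Mo z a c r) = Mo z (a - d) (c - d)
      (LO.hScal n lam d (c - d) * (r * (a.descFactorial d : ℂ) * (c.descFactorial d : ℂ))) := by
  rw [LO.bh, Dop_iter_Mo, cE_Mo]

theorem bg_Mo {n : ℕ} (z : Fin n) (lam : ℂ) (d a c : ℕ) (r : ℂ) :
    LO.bg lam d (Mo z a c r) = Mo z (a - d) (c - d)
      (LO.gScal n lam d (c - d) * (r * (a.descFactorial d : ℂ) * (c.descFactorial d : ℂ))) := by
  rw [LO.bg, Dop_iter_Mo, cE_Mo]

theorem bg_zero' {n : ℕ} (z : Fin n) (lam : ℂ) (d : ℕ) : LO.bg lam d (0 : PolA n) = 0 := by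
  rw [← Mo_zero z 0 0, bg_Mo]; simp [Mo_zero]

theorem foldr_zero' {n : ℕ} (l : List (Fin n)) :
    l.foldr (fun i acc => pderiv (Sum.inl i) acc) (0 : PolA n) = 0 := by
  induction l with
  | nil => rfl
  | cons i l ih => rw [List.foldr_cons, ih, map_zero]

theorem foldr_u {n : ℕ} (z : Fin n) (l : List (Fin n)) (hl : l ≠ []) :
    ∃ c : ℂ, l.foldr (fun i acc => pderiv (Sum.inl i) acc) (Mo z 1 0 1) = MvPolynomial.C c := by
  induction l with
  | nil => exact absurd rfl hl
  | cons i l ih =>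
    rw [List.foldr_cons]
    by_cases h : l = []
    · subst h
      rw [List.foldr_nil, pderiv_inl_Mo]
      split_ifs
      · exact ⟨1, by simp [Mo]⟩
      · exact ⟨0, by simp⟩
    · obtain ⟨c, hc⟩ := ih h
      exact ⟨0, by rw [hc, pderiv_C, map_zero]⟩

theorem Nop_zero_right {n : ℕ} (k : ℕ) (φ : PolA n) : LO.Nop k φ 0 = 0 := by
  simp [LO.Nop, foldr_zero']

theorem Nop_0 {n : ℕ} (φ ψ : PolA n) : LO.Nop 0 φ ψ = φ * ψ := by
  simp [LO.Nop]

theorem Nop_1 {n : ℕ} (φ ψ : PolA n) :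
    LO.Nop 1 φ ψ = ∑ i : Fin n, pderiv (Sum.inr i) φ * pderiv (Sum.inl i) ψ := by
  simp only [LO.Nop, Nat.factorial_one, Nat.cast_one, inv_one, one_smul]
  refine Fintype.sum_equiv (Equiv.funUnique (Fin 1) (Fin n)) _ _ fun α => ?_
  simp

theorem Nop_ge2 {n : ℕ} (z : Fin n) (k : ℕ) (φ : PolA n) :
    LO.Nop (k + 2) φ (Mo z 1 0 1) = 0 := by
  unfold LO.Nop
  rw [Finset.sum_eq_zero, smul_zero]
  intro α _
  rw [List.ofFn_succ, List.foldr_cons (f := fun i acc => pderiv (Sum.inl i) acc)]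
  obtain ⟨c, hc⟩ := foldr_u z (List.ofFn fun i : Fin (k + 1) => α i.succ)
    (by rw [Ne, List.ofFn_eq_nil_iff]; omega)
  rw [hc, pderiv_C, mul_zero]

theorem Mo_mul_u {n : ℕ} (z : Fin n) (a c : ℕ) (r : ℂ) :
    Mo z a c r * Mo z 1 0 1 = Mo z (a + 1) c r := by
  unfold Mo
  rw [monomial_mul, mul_one]
  congr 1
  rw [Finsupp.single_add, Finsupp.single_zero, add_zero, add_right_comm]

theorem Nop_1_Mo {n : ℕ} (z : Fin n) (a c : ℕ) (r : ℂ) :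
    LO.Nop 1 (Mo z a c r) (Mo z 1 0 1) = Mo z a (c - 1) (r * c) := by
  rw [Nop_1, Finset.sum_eq_single z]
  · rw [pderiv_inr_Mo, if_pos rfl, pderiv_inl_Mo, if_pos rfl]
    have : Mo z (1 - 1) 0 (1 * ((1 : ℕ) : ℂ)) = 1 := by simp [Mo]
    rw [this, mul_one]
  · intro i _ hi
    rw [pderiv_inr_Mo, if_neg hi, zero_mul]
  · simp

theorem bh_u_0 {n : ℕ} (z : Fin n) (lam : ℂ) : LO.bh lam 0 (Mo z 1 0 1) = Mo z 1 0 1 := by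
  rw [bh_Mo]; simp [LO.hScal]

theorem bh_u_succ {n : ℕ} (z : Fin n) (lam : ℂ) (j : ℕ) :
    LO.bh lam (j + 1) (Mo z 1 0 1) = 0 := by
  rw [bh_Mo]; simp [Mo_zero]

theorem Mo_sum {n : ℕ} (z : Fin n) (a c : ℕ) {ι : Type*} (s : Finset ι) (f : ι → ℂ) :
    ∑ i ∈ s, Mo z a c (f i) = Mo z a c (∑ i ∈ s, f i) := by
  unfold Mo; rw [map_sum]

theorem Mo_add {n : ℕ} (z : Fin n) (a c : ℕ) (x y : ℂ) :
    Mo z a c x + Mo z a c y = Mo z a c (x + y) := by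
  unfold Mo; rw [map_add]

theorem term0 {n : ℕ} (z : Fin n) (lam : ℂ) (q s m i : ℕ) (h : i + m = q + 1) :
    LO.bg lam m (LO.Nop 0 (LO.bh lam i (Mo z q (s + q + 1) 1)) (LO.bh lam 0 (Mo z 1 0 1))) =
      Mo z 0 s ((m : ℂ) * (LO.gScal n lam m s * LO.hScal n lam i (s + m)) *
        ((q.factorial : ℂ) * ((s + q + 1).descFactorial (q + 1) : ℂ))) := by
  rw [bh_u_0, Nop_0, bh_Mo, Mo_mul_u, bg_Mo]
  rcases Nat.eq_zero_or_pos m with hm | hm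
  · have hi : i = q + 1 := by omega
    subst hm hi
    rw [Nat.descFactorial_eq_zero_iff_lt.mpr (Nat.lt_succ_self q)]
    simp [Mo_zero]
  · have hiq : i ≤ q := by omega
    have e1 : q - i + 1 = m := by omega
    have e2 : s + q + 1 - i = s + m := by omega
    have e3 : s + m - m = s := by omega
    rw [e1, e2, e3, Nat.sub_self, Nat.descFactorial_self]
    have f1 : (q - i).factorial * q.descFactorial i = q.factorial :=
      Nat.factorial_mul_descFactorial hiq
    have f2 : (s + q + 1 - i).descFactorial (q + 1 - i) * (s + q + 1).descFactorial i =
      (s + q + 1).descFactorial (q + 1) := Nat.descFactorial_mul_descFactorial (by omega)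
    have e4 : q + 1 - i = m := by omega
    rw [e2, e4] at f2
    have f3 : m.factorial = m * (q - i).factorial := by
      rw [← e1, Nat.factorial_succ]
    rw [← f1, ← f2, f3]
    congr 1
    push_cast
    ring

theorem term1 {n : ℕ} (z : Fin n) (lam : ℂ) (q s m i : ℕ) (h : i + m = q) :
    LO.bg lam m (LO.Nop 1 (LO.bh lam i (Mo z q (s + q + 1) 1)) (LO.bh lam 0 (Mo z 1 0 1))) =
      Mo z 0 s ((LO.gScal n lam m s * LO.hScal n lam i (s + 1 + m)) *
        ((q.factorial : ℂ) * ((s + q + 1).descFactorial (q + 1) : ℂ))) := by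
  rw [bh_u_0, bh_Mo, Nop_1_Mo, bg_Mo]
  have e1 : q - i = m := by omega
  have e2 : s + q + 1 - i = s + 1 + m := by omega
  have e3 : s + 1 + m - 1 - m = s := by omega
  have f1 : (q - i).factorial * q.descFactorial i = q.factorial :=
    Nat.factorial_mul_descFactorial (by omega)
  have f2 : (s + q + 1 - (i + 1)).descFactorial (q + 1 - (i + 1)) *
      (s + q + 1).descFactorial (i + 1) =
    (s + q + 1).descFactorial (q + 1) := Nat.descFactorial_mul_descFactorial (by omega)
  have e4 : q + 1 - (i + 1) = m := by omega
  have e5 : s + q + 1 - (i + 1) = s + 1 + m - 1 := by omega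
  rw [Nat.descFactorial_succ, e2, e4, e5] at f2
  rw [e1] at f1
  rw [e1, e2, e3, Nat.sub_self, Nat.descFactorial_self, ← f1, ← f2]
  congr 1
  push_cast
  ring

theorem C_eval {n : ℕ} (z : Fin n) (lam : ℂ) (q s : ℕ) :
    LO.C n lam (q + 1) (Mo z q (s + q + 1) 1) (Mo z 1 0 1) =
      Mo z 0 s (Kscal n lam q s *
        ((q.factorial : ℂ) * ((s + q + 1).descFactorial (q + 1) : ℂ))) := by
  unfold LO.C
  rw [sum_collapse_aux q (fun i j k m => LO.bg lam m (LO.Nop k (LO.bh lam i (Mo z q (s + q + 1) 1))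
    (LO.bh lam j (Mo z 1 0 1))))]
  · rw [Finset.sum_congr rfl fun m hm => term0 z lam q s m (q + 1 - m)
        (by rw [Finset.mem_range] at hm; omega),
      Finset.sum_congr rfl fun m hm => term1 z lam q s m (q - m)
        (by rw [Finset.mem_range] at hm; omega), Mo_sum, Mo_sum, Mo_add,
      ← Finset.sum_mul, ← Finset.sum_mul, ← add_mul]
    rfl
  · intro i j k m
    simp only [bh_u_succ, Nop_zero_right, bg_zero' z]
  · intro i k m
    simp only [bh_u_0, Nop_ge2, bg_zero' z]

theorem K_poly (n : ℕ) (hn : 1 ≤ n) (lam : ℂ) (q : ℕ) (hB : LO.Bidiff n (LO.C n lam (q + 1))) :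
    ∃ P : Polynomial ℂ, ∀ s : ℕ, (q.factorial : ℂ) * Kscal n lam q s = P.eval (s : ℂ) := by
  obtain ⟨N, A, B, hAB⟩ := hB
  let z : Fin n := ⟨0, hn⟩
  have h0 : (fun b => Mo z q b 1) ∈ SSeq z := by
    have : (fun b => Mo z q b 1) =
        (monomial (Finsupp.single (Sum.inl z) q) (1 : ℂ) : PolA n) • eSeq z 0 := by
      funext b
      simp [Mo, eSeq, monomial_mul]
    rw [this]
    exact Submodule.smul_mem _ _ (Submodule.subset_span ⟨0, rfl⟩)
  have h1 : (fun b => LO.C n lam (q + 1) (Mo z q b 1) (Mo z 1 0 1)) ∈ SSeq z := by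
    have : (fun b => LO.C n lam (q + 1) (Mo z q b 1) (Mo z 1 0 1)) =
        ∑ α : Fin N, ((B α : Module.End ℂ (PolA n)) (Mo z 1 0 1)) •
          (fun b => (A α : Module.End ℂ (PolA n)) (Mo z q b 1)) := by
      funext b
      rw [hAB, Finset.sum_apply]
      refine Finset.sum_congr rfl fun α _ => ?_
      rw [Pi.smul_apply, smul_eq_mul, mul_comm]
    rw [this]
    exact Submodule.sum_mem _ fun α _ => Submodule.smul_mem _ _ (SSeq_weyl z _ (A α).2 _ h0)
  obtain ⟨P, hP⟩ := SSeq_coef z _ h1 (q + 1)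
  refine ⟨P.comp (Polynomial.X + Polynomial.C ((q : ℂ) + 1)), fun s => ?_⟩
  have h2 := hP (s + q + 1) (by omega)
  simp only [C_eval] at h2
  have e : s + q + 1 - (q + 1) = s := by omega
  rw [e] at h2
  have e2 : coeff (Finsupp.single (Sum.inr z) s) (Mo z 0 s (Kscal n lam q s *
        ((q.factorial : ℂ) * ((s + q + 1).descFactorial (q + 1) : ℂ)))) = Kscal n lam q s *
        ((q.factorial : ℂ) * ((s + q + 1).descFactorial (q + 1) : ℂ)) := by
    simp [Mo]
  rw [e2] at h2
  have hne : ((s + q + 1).descFactorial (q + 1) : ℂ) ≠ 0 := by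
    rw [Nat.cast_ne_zero, Ne, Nat.descFactorial_eq_zero_iff_lt]; omega
  have h3 : ((s + q + 1).descFactorial (q + 1) : ℂ) * ((q.factorial : ℂ) * Kscal n lam q s) =
      ((s + q + 1).descFactorial (q + 1) : ℂ) * P.eval ((s + q + 1 : ℕ) : ℂ) := by
    rw [← h2]; ring
  rw [mul_left_cancel₀ hne h3, Polynomial.eval_comp]
  congr 1
  simp
  ring

open Finset in
theorem stmt_9_core (n : ℕ) (hn : 1 ≤ n) (lam : ℂ) (q : ℕ)
    (hB : LO.Bidiff n (LO.C n lam (q + 1))) : lam = 1 / 2 ∧ q = 0 := by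
  obtain ⟨P, hP⟩ := K_poly n hn lam q hB
  let L : Polynomial ℂ := Polynomial.C (q.factorial : ℂ) *
    ∏ r ∈ range (q + 1), (Polynomial.X + Polynomial.C ((n : ℂ) - lam * (n + 1) + 1 + r))
  let D : Polynomial ℂ :=
    ∏ r ∈ range (2 * q + 1), (Polynomial.C 2 * Polynomial.X + Polynomial.C ((n : ℂ) + 1 + r))
  have hq : (q.factorial : ℂ) ≠ 0 := Nat.cast_ne_zero.mpr (Nat.factorial_ne_zero q)
  have hLD : L = P * D := by
    obtain ⟨s0, hs0⟩ := exists_nat_gt (-(lam * ((n : ℂ) + 1)).re)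
    apply Polynomial.eq_of_infinite_eval_eq
    refine Set.infinite_of_injective_forall_mem (f := fun k : ℕ => ((s0 + k : ℕ) : ℂ))
      (fun a b hab => by simpa using hab) fun k => ?_
    have hK := aux_K n hn lam q (s0 + k) (by
      intro m hm
      have := congrArg Complex.re hm
      have e : (((s0 + k : ℕ) : ℂ) + lam * (n + 1) + m).re =
        (s0 : ℝ) + k + (lam * ((n : ℂ) + 1)).re + m := by
        rw [Complex.add_re, Complex.add_re, Complex.natCast_re, Complex.natCast_re]; push_cast; ring
      rw [e, Complex.zero_re] at this
      have : (0 : ℝ) ≤ k := Nat.cast_nonneg k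
      have : (0 : ℝ) ≤ m := Nat.cast_nonneg m
      linarith)
    have hPs := hP (s0 + k)
    simp only [Set.mem_ofPred_eq, L, D, Polynomial.eval_mul, Polynomial.eval_prod,
      Polynomial.eval_add, Polynomial.eval_X, Polynomial.eval_C]
    rw [← hPs, mul_assoc]
    congr 1
    have g1 : ∀ r : ℕ, 2 * (((s0 + k : ℕ) : ℂ)) + ((n : ℂ) + 1 + r) =
      2 * (((s0 + k : ℕ) : ℂ)) + n + 1 + r := by intro r; ring
    have g2 : ∀ r : ℕ, (((s0 + k : ℕ) : ℂ)) + ((n : ℂ) - lam * (n + 1) + 1 + r) =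
      (((s0 + k : ℕ) : ℂ)) + n - lam * (n + 1) + 1 + r := by intro r; ring
    simp only [g1, g2]
    exact hK.symm
  have hLm : (∏ r ∈ range (q + 1),
      (Polynomial.X + Polynomial.C ((n : ℂ) - lam * (n + 1) + 1 + r))).Monic :=
    Polynomial.monic_prod_of_monic _ _ fun i _ => Polynomial.monic_X_add_C _
  have hL0 : L ≠ 0 := mul_ne_zero (by simpa using hq) hLm.ne_zero
  have hLd : L.natDegree = q + 1 := by
    rw [Polynomial.natDegree_C_mul hq,
      Polynomial.natDegree_prod_of_monic _ _ (fun i _ => Polynomial.monic_X_add_C _)]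
    simp only [Polynomial.natDegree_X_add_C]; simp
  have hfac : ∀ r : ℕ, (Polynomial.C 2 * Polynomial.X +
      Polynomial.C ((n : ℂ) + 1 + r)).natDegree = 1 := fun r =>
    Polynomial.natDegree_linear two_ne_zero
  have hDd : D.natDegree = 2 * q + 1 := by
    rw [Polynomial.natDegree_prod]
    · simp only [hfac]; simp
    · intro r _ h0
      have := hfac r
      rw [h0] at this; simp at this
  have hP0 : P ≠ 0 := by rintro rfl; exact hL0 (by rw [hLD, zero_mul])
  have hD0 : D ≠ 0 := by intro h0; exact hL0 (by rw [hLD, h0, mul_zero])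
  have hdeg : q + 1 = P.natDegree + (2 * q + 1) := by
    rw [← hLd, ← hDd, hLD, Polynomial.natDegree_mul hP0 hD0]
  have hq0 : q = 0 := by omega
  subst hq0
  refine ⟨?_, rfl⟩
  have hev := congrArg (Polynomial.eval (-((n : ℂ) + 1) / 2)) hLD
  simp only [L, D, Polynomial.eval_mul, Polynomial.eval_prod,
      Polynomial.eval_add, Polynomial.eval_X, Polynomial.eval_C] at hev
  have hn1 : (n : ℂ) + 1 ≠ 0 := Nat.cast_add_one_ne_zero n
  have r1 : range (0 + 1) = {0} := rfl
  rw [r1, Finset.prod_singleton, Finset.prod_singleton] at hev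
  have : (1 / 2 - lam) * ((n : ℂ) + 1) = 0 := by
    simp only [Nat.factorial_zero, Nat.cast_one, Nat.cast_zero] at hev
    linear_combination hev
  rcases mul_eq_zero.mp this with h | h
  · linear_combination -h
  · exact absurd h hn1

/-- Corollary 4: for `p ≥ 1` and `(λ,p) ≠ (1/2,1)`, the bilinear map
`C^λ_p` is not bidifferential. -/
theorem stmt_9 (n : ℕ) (hn : 1 ≤ n) (lam : ℂ) (p : ℕ) (hp : 1 ≤ p)
    (h : ¬(lam = 1 / 2 ∧ p = 1)) :
    ¬ LO.Bidiff n (LO.C n lam p) := by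
  obtain ⟨q, rfl⟩ : ∃ q, p = q + 1 := ⟨p - 1, by omega⟩
  intro hB
  obtain ⟨h1, h2⟩ := stmt_9_core n hn lam q hB
  exact h ⟨h1, by omega⟩
end

section
/- For every λ ∈ ℂ, every p ≥ 0, every momentum function μ ∈ M, and all φ, ψ ∈ A, one has {μ, C^λ_p(φ,ψ)} = C^λ_p({μ,φ}, ψ) + C^λ_p(φ, {μ,ψ}); that is, each coefficient C^λ_p of the Lecomte–Ovsienko star product is infinitesimally equivariant for the Hamiltonian action of sl_{n+1}(ℝ). -/
open MvPolynomial

namespace LO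
open Finset

/-! ### `cE` -/

lemma coeff_cE {n : ℕ} (c : ℕ → ℂ) (φ : PolA n) (d) :
    coeff d (cE c φ) = c (xiDeg d) * coeff d φ := by
  classical
  simp only [cE, coeff_sum, coeff_monomial]
  rw [Finset.sum_ite_eq' φ.support d]
  split_ifs with h
  · rfl
  · rw [notMem_support_iff.mp h, mul_zero]

lemma cE_add {n : ℕ} (c : ℕ → ℂ) (φ ψ : PolA n) : cE c (φ + ψ) = cE c φ + cE c ψ := by
  ext d; simp only [coeff_cE, coeff_add]; ring

lemma cE_sub {n : ℕ} (c : ℕ → ℂ) (φ ψ : PolA n) : cE c (φ - ψ) = cE c φ - cE c ψ := by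
  ext d; simp only [coeff_cE, coeff_sub]; ring

lemma cE_smul {n : ℕ} (c : ℕ → ℂ) (a : ℂ) (φ : PolA n) : cE c (a • φ) = a • cE c φ := by
  ext d; simp only [coeff_cE, coeff_smul, smul_eq_mul]; ring

lemma cE_cE {n : ℕ} (c c' : ℕ → ℂ) (φ : PolA n) :
    cE c (cE c' φ) = cE (fun m => c m * c' m) φ := by
  ext d; simp only [coeff_cE]; ring

/-- `cE` as a linear map. -/
noncomputable def cEL (n : ℕ) (c : ℕ → ℂ) : PolA n →ₗ[ℂ] PolA n where
  toFun := cE c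
  map_add' := cE_add c
  map_smul' := cE_smul c

lemma cEL_apply {n : ℕ} (c : ℕ → ℂ) (φ : PolA n) : cEL n c φ = cE c φ := rfl

lemma cE_monomial {n : ℕ} (c : ℕ → ℂ) (s) (a : ℂ) :
    cE c (monomial s a : PolA n) = monomial s (c (xiDeg s) * a) := by
  classical
  ext d
  simp only [coeff_cE, coeff_monomial]
  split_ifs with h
  · rw [h]
  · simp

/-- `∂/∂u_l`. -/
noncomputable def du {n : ℕ} (l : Fin n) : PolA n →ₗ[ℂ] PolA n := (pderiv (Sum.inl l)).toLinearMap
/-- `∂/∂ξ_l`. -/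
noncomputable def dx {n : ℕ} (l : Fin n) : PolA n →ₗ[ℂ] PolA n := (pderiv (Sum.inr l)).toLinearMap
/-- `u_l`. -/
noncomputable def uu {n : ℕ} (l : Fin n) : PolA n := X (Sum.inl l)
/-- `ξ_l`. -/
noncomputable def xx {n : ℕ} (l : Fin n) : PolA n := X (Sum.inr l)

lemma pd_comm {n : ℕ} (v w : Fin n ⊕ Fin n) (φ : PolA n) :
    pderiv v (pderiv w φ) = pderiv w (pderiv v φ) := by
  have : ⁅(pderiv v : Derivation ℂ (PolA n) (PolA n)), (pderiv w : Derivation ℂ (PolA n) (PolA n))⁆ = 0 := by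
    classical
    apply MvPolynomial.derivation_ext
    intro i
    simp only [Derivation.commutator_apply, pderiv_X, Derivation.zero_apply]
    rw [Pi.single_apply, Pi.single_apply]
    split_ifs <;> simp
  have h := congrArg (fun D : Derivation ℂ (PolA n) (PolA n) => D φ) this
  simpa [Derivation.commutator_apply, sub_eq_zero] using h

variable {n : ℕ}

lemma du_monomial (l : Fin n) (s) (a : ℂ) : du l (monomial s a : PolA n) =
    monomial (s - Finsupp.single (Sum.inl l) 1) (a * s (Sum.inl l)) := pderiv_monomial
lemma dx_monomial (l : Fin n) (s) (a : ℂ) : dx l (monomial s a : PolA n) =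
    monomial (s - Finsupp.single (Sum.inr l) 1) (a * s (Sum.inr l)) := pderiv_monomial

lemma du_du (l m : Fin n) (a : PolA n) : du l (du m a) = du m (du l a) := pd_comm _ _ _
lemma dx_dx (l m : Fin n) (a : PolA n) : dx l (dx m a) = dx m (dx l a) := pd_comm _ _ _
lemma dx_du (l m : Fin n) (a : PolA n) : dx l (du m a) = du m (dx l a) := pd_comm _ _ _

lemma du_mul (l : Fin n) (a b : PolA n) : du l (a * b) = a * du l b + b * du l a := by
  simp [du, Derivation.leibniz]
lemma dx_mul (l : Fin n) (a b : PolA n) : dx l (a * b) = a * dx l b + b * dx l a := by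
  simp [dx, Derivation.leibniz]

lemma du_uu (l m : Fin n) : du l (uu m : PolA n) = if l = m then 1 else 0 := by
  classical
  simp [du, uu, pderiv_X, Pi.single_apply, eq_comm]
lemma dx_xx (l m : Fin n) : dx l (xx m : PolA n) = if l = m then 1 else 0 := by
  classical
  simp [dx, xx, pderiv_X, Pi.single_apply, eq_comm]
lemma du_xx (l m : Fin n) : du l (xx m : PolA n) = 0 := by
  classical
  simp [du, xx, pderiv_X]
lemma dx_uu (l m : Fin n) : dx l (uu m : PolA n) = 0 := by
  classical
  simp [dx, uu, pderiv_X]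

lemma ext_mono (f g : PolA n →ₗ[ℂ] PolA n) (h : ∀ s a, f (monomial s a) = g (monomial s a))
    (φ : PolA n) : f φ = g φ := by
  rw [φ.as_sum, map_sum, map_sum]
  exact Finset.sum_congr rfl fun s _ => h _ _

lemma du_cE (c : ℕ → ℂ) (l : Fin n) (φ : PolA n) : du l (cE c φ) = cE c (du l φ) := by
  refine ext_mono ((du l) ∘ₗ cEL n c) (cEL n c ∘ₗ du l) ?_ φ
  intro s a
  simp only [LinearMap.comp_apply, cEL_apply, cE_monomial, du_monomial]
  have : xiDeg (s - Finsupp.single (Sum.inl l) 1) = xiDeg s := by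
    simp [xiDeg]
  rw [this]; ring_nf

lemma dx_cE (c : ℕ → ℂ) (l : Fin n) (φ : PolA n) :
    dx l (cE c φ) = cE (fun m => c (m + 1)) (dx l φ) := by
  refine ext_mono ((dx l) ∘ₗ cEL n c) (cEL n (fun m => c (m + 1)) ∘ₗ dx l) ?_ φ
  intro s a
  simp only [LinearMap.comp_apply, cEL_apply, cE_monomial, dx_monomial]
  by_cases h0 : s (Sum.inr l) = 0
  · simp [h0]
  have : xiDeg (s - Finsupp.single (Sum.inr l) 1) + 1 = xiDeg s := by
    classical
    have h : s = (s - Finsupp.single (Sum.inr l) 1) + Finsupp.single (Sum.inr l) 1 := by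
      rw [tsub_add_cancel_of_le]
      simpa [Nat.one_le_iff_ne_zero] using h0
    conv_rhs => rw [h]
    simp [xiDeg, Finset.sum_add_distrib, Finsupp.single_apply]
  rw [this]; ring_nf

lemma cE_uu (c : ℕ → ℂ) (l : Fin n) (φ : PolA n) : cE c (uu l * φ) = uu l * cE c φ := by
  refine ext_mono (cEL n c ∘ₗ LinearMap.mulLeft ℂ (uu l)) (LinearMap.mulLeft ℂ (uu l) ∘ₗ cEL n c) ?_ φ
  intro s a
  simp only [LinearMap.comp_apply, cEL_apply, cE_monomial, LinearMap.mulLeft_apply, uu, X,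
    monomial_mul]
  have : xiDeg (Finsupp.single (Sum.inl l) 1 + s) = xiDeg s := by
    simp [xiDeg]
  rw [this]; ring_nf

lemma cE_xx (c : ℕ → ℂ) (l : Fin n) (φ : PolA n) :
    cE c (xx l * φ) = xx l * cE (fun m => c (m + 1)) φ := by
  refine ext_mono (cEL n c ∘ₗ LinearMap.mulLeft ℂ (xx l)) (LinearMap.mulLeft ℂ (xx l) ∘ₗ cEL n (fun m => c (m + 1))) ?_ φ
  intro s a
  simp only [LinearMap.comp_apply, cEL_apply, cE_monomial, LinearMap.mulLeft_apply, xx, X,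
    monomial_mul]
  have : xiDeg (Finsupp.single (Sum.inr l) 1 + s) = xiDeg s + 1 := by
    classical
    simp [xiDeg, Finset.sum_add_distrib, Finsupp.single_apply, add_comm]
  rw [this]; ring_nf

lemma euler (φ : PolA n) : ∑ l, xx l * dx l φ = cE (fun m => (m : ℂ)) φ := by
  have := ext_mono (∑ l : Fin n, LinearMap.mulLeft ℂ (xx l) ∘ₗ dx l) (cEL n (fun m => (m : ℂ))) ?_ φ
  · simpa [LinearMap.sum_apply, cEL_apply] using this
  intro s a
  simp only [LinearMap.sum_apply, LinearMap.comp_apply, cEL_apply, cE_monomial,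
    LinearMap.mulLeft_apply, xx]
  have h : ∀ l : Fin n, (X (Sum.inr l) * dx l (monomial s a) : PolA n)
      = s (Sum.inr l) • monomial s a := fun l => X_mul_pderiv_monomial
  simp only [h]
  rw [← Finset.sum_smul, xiDeg]
  simp [← Nat.cast_smul_eq_nsmul ℂ, smul_monomial]

/-! ### `D` -/

/-- `D` as a linear map. -/
noncomputable def DL (n : ℕ) : PolA n →ₗ[ℂ] PolA n := ∑ l, du l ∘ₗ dx l

lemma Dop_eq : (Dop : PolA n → PolA n) = DL n := by
  ext1 φ; simp [Dop, DL, du, dx, LinearMap.sum_apply]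

lemma DL_apply (φ : PolA n) : DL n φ = ∑ l, du l (dx l φ) := by
  simp [DL, LinearMap.sum_apply]

lemma DL_uu (l : Fin n) (a : PolA n) : DL n (uu l * a) = uu l * DL n a + dx l a := by
  simp only [DL_apply, dx_mul, du_mul, dx_uu, du_uu, mul_zero, add_zero, map_add, map_zero,
    Finset.sum_add_distrib, Finset.mul_sum]
  simp

lemma DL_xx (l : Fin n) (a : PolA n) : DL n (xx l * a) = xx l * DL n a + du l a := by
  simp only [DL_apply, dx_mul, du_mul, dx_xx, du_xx, mul_zero, add_zero, map_add, map_zero,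
    Finset.sum_add_distrib, Finset.mul_sum]
  congr 1
  have h1 : ∀ x : Fin n, du x (if x = l then 1 else 0 : PolA n) = 0 := by
    intro x
    split_ifs
    · simp [du]
    · simp
  simp [h1]

lemma DL_du (l : Fin n) (a : PolA n) : DL n (du l a) = du l (DL n a) := by
  simp only [DL_apply, map_sum]
  exact Finset.sum_congr rfl fun m _ => by rw [dx_du, du_du]

lemma DL_dx (l : Fin n) (a : PolA n) : DL n (dx l a) = dx l (DL n a) := by
  simp only [DL_apply, map_sum]
  exact Finset.sum_congr rfl fun m _ => by rw [dx_du, dx_dx]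

lemma DL_cE (c : ℕ → ℂ) (φ : PolA n) : DL n (cE c φ) = cE (fun m => c (m + 1)) (DL n φ) := by
  simp only [DL_apply, ← cEL_apply, map_sum]
  simp only [cEL_apply, dx_cE, du_cE]

/-! ### `N_k` -/

/-- `k! N_k`. -/
noncomputable def Mop (n : ℕ) : ℕ → PolA n →ₗ[ℂ] PolA n →ₗ[ℂ] PolA n
  | 0 => LinearMap.mul ℂ (PolA n)
  | k + 1 => ∑ l, (Mop n k).compl₁₂ (dx l) (du l)

lemma Mop_zero (a b : PolA n) : Mop n 0 a b = a * b := rfl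
lemma Mop_succ (k : ℕ) (a b : PolA n) : Mop n (k + 1) a b = ∑ l, Mop n k (dx l a) (du l b) := by
  simp [Mop, LinearMap.sum_apply]

lemma Nop_aux (k : ℕ) (φ ψ : PolA n) : ∑ α : Fin k → Fin n,
      ((List.ofFn α).foldr (fun i acc => pderiv (Sum.inr i) acc) φ) *
      ((List.ofFn α).foldr (fun i acc => pderiv (Sum.inl i) acc) ψ) = Mop n k φ ψ := by
  induction k generalizing φ ψ with
  | zero => simp [Mop_zero]
  | succ k ih =>
    rw [Mop_succ, ← (Fin.snocEquiv (fun _ : Fin (k + 1) => Fin n)).sum_comp, Fintype.sum_prod_type]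
    refine Finset.sum_congr rfl fun l _ => ?_
    rw [← ih]
    refine Finset.sum_congr rfl fun α _ => ?_
    rw [List.ofFn_succ']
    simp [Fin.snocEquiv, du, dx]

lemma Nop_eq (k : ℕ) (φ ψ : PolA n) : Nop k φ ψ = (k.factorial : ℂ)⁻¹ • Mop n k φ ψ := by
  rw [Nop, Nop_aux]

lemma du_M (j : Fin n) (k : ℕ) (a b : PolA n) :
    du j (Mop n k a b) = Mop n k (du j a) b + Mop n k a (du j b) := by
  induction k generalizing a b with
  | zero => simp only [Mop_zero, du_mul]; ring
  | succ k ih =>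
    simp only [Mop_succ, map_sum, ih, Finset.sum_add_distrib]
    simp only [dx_du, du_du j]

lemma dx_M (j : Fin n) (k : ℕ) (a b : PolA n) :
    dx j (Mop n k a b) = Mop n k (dx j a) b + Mop n k a (dx j b) := by
  induction k generalizing a b with
  | zero => simp only [Mop_zero, dx_mul]; ring
  | succ k ih =>
    simp only [Mop_succ, map_sum, ih, Finset.sum_add_distrib]
    simp only [dx_du, dx_dx j]

lemma M_ul (j : Fin n) (k : ℕ) (a b : PolA n) :
    Mop n k (uu j * a) b = uu j * Mop n k a b := by
  induction k generalizing a b with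
  | zero => simp only [Mop_zero]; ring
  | succ k ih =>
    simp only [Mop_succ, dx_mul, dx_uu, mul_zero, add_zero, ih, Finset.mul_sum]

lemma M_xr (j : Fin n) (k : ℕ) (a b : PolA n) :
    Mop n k a (xx j * b) = xx j * Mop n k a b := by
  induction k generalizing a b with
  | zero => simp only [Mop_zero]; ring
  | succ k ih =>
    simp only [Mop_succ, du_mul, du_xx, mul_zero, add_zero, ih, Finset.mul_sum]

lemma M_fold (k : ℕ) (a b : PolA n) :
    ∑ l, (k : ℂ) • Mop n (k - 1) (dx l a) (du l b) = (k : ℂ) • Mop n k a b := by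
  cases k with
  | zero => simp
  | succ k => rw [Mop_succ, Finset.smul_sum]; rfl

lemma M_ur (j : Fin n) (k : ℕ) (a b : PolA n) :
    Mop n k a (uu j * b) = uu j * Mop n k a b + (k : ℂ) • Mop n (k - 1) (dx j a) b := by
  induction k generalizing a b with
  | zero => simp only [Mop_zero]; simp; ring
  | succ k ih =>
    simp only [Mop_succ, du_mul, map_add, ih, Finset.mul_sum, Finset.sum_add_distrib]
    simp only [dx_dx j, M_fold]
    have : ∑ l, Mop n k (dx l a) (b * du l (uu j)) = Mop n k (dx j a) b := by
      rw [Finset.sum_eq_single j]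
      · simp [du_uu]
      · intro l _ hl; simp [du_uu, hl]
      · simp
    rw [this]
    push_cast
    rw [add_smul, one_smul]
    rw [add_assoc]

lemma M_xl (j : Fin n) (k : ℕ) (a b : PolA n) :
    Mop n k (xx j * a) b = xx j * Mop n k a b + (k : ℂ) • Mop n (k - 1) a (du j b) := by
  induction k generalizing a b with
  | zero => simp only [Mop_zero]; simp; ring
  | succ k ih =>
    simp only [Mop_succ, dx_mul, map_add, LinearMap.add_apply, ih, Finset.mul_sum,
      Finset.sum_add_distrib]
    simp only [du_du j, M_fold]
    have : ∑ l, Mop n k (a * dx l (xx j)) (du l b) = Mop n k a (du j b) := by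
      rw [Finset.sum_eq_single j]
      · simp [dx_xx]
      · intro l _ hl; simp [dx_xx, hl]
      · simp
    rw [this]
    push_cast
    rw [add_smul, one_smul]
    rw [add_assoc]

/-! ### Linearity of the building blocks -/

/-- `bh` as a linear map. -/
noncomputable def bhL (n : ℕ) (lam : ℂ) (d : ℕ) : PolA n →ₗ[ℂ] PolA n :=
  cEL n (hScal n lam d) ∘ₗ (DL n ^ d)
/-- `bg` as a linear map. -/
noncomputable def bgL (n : ℕ) (lam : ℂ) (d : ℕ) : PolA n →ₗ[ℂ] PolA n :=
  cEL n (gScal n lam d) ∘ₗ (DL n ^ d)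
/-- `N_k` as a bilinear map. -/
noncomputable def NL (n k : ℕ) : PolA n →ₗ[ℂ] PolA n →ₗ[ℂ] PolA n :=
  (k.factorial : ℂ)⁻¹ • Mop n k

lemma bh_eq (lam : ℂ) (d : ℕ) (φ : PolA n) : bh lam d φ = bhL n lam d φ := by
  rw [bh, Dop_eq, bhL, LinearMap.comp_apply, Module.End.pow_apply, cEL_apply]
lemma bg_eq (lam : ℂ) (d : ℕ) (φ : PolA n) : bg lam d φ = bgL n lam d φ := by
  rw [bg, Dop_eq, bgL, LinearMap.comp_apply, Module.End.pow_apply, cEL_apply]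
lemma N_eq (k : ℕ) (φ ψ : PolA n) : Nop k φ ψ = NL n k φ ψ := by
  rw [Nop_eq]; rfl

/-- Fourfold convolution sum. -/
noncomputable def S (N p : ℕ) (f : ℕ → ℕ → ℕ → ℕ → PolA n) : PolA n :=
  ∑ i ∈ range N, ∑ j ∈ range N, ∑ k ∈ range N, ∑ m ∈ range N,
    if i + j + k + m = p then f i j k m else 0

lemma S_grow (N p : ℕ) (h : p < N) (f : ℕ → ℕ → ℕ → ℕ → PolA n) : S (N + 1) p f = S N p f := by
  have e1 : ∀ j k m, ¬ (N + j + k + m = p) := by intros; omega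
  have e2 : ∀ j k m, ¬ (j + N + k + m = p) := by intros; omega
  have e3 : ∀ j k m, ¬ (j + k + N + m = p) := by intros; omega
  have e4 : ∀ j k m, ¬ (j + k + m + N = p) := by intros; omega
  simp only [S, sum_range_succ _ N, e1, e2, e3, e4, if_false, sum_const_zero, add_zero]

lemma S_add (N p : ℕ) (f g : ℕ → ℕ → ℕ → ℕ → PolA n) :
    S N p (fun i j k m => f i j k m + g i j k m) = S N p f + S N p g := by
  simp only [S, ← sum_add_distrib]
  refine sum_congr rfl fun i _ => sum_congr rfl fun j _ => sum_congr rfl fun k _ =>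
    sum_congr rfl fun m _ => ?_
  split_ifs <;> simp

/-- Index shift. -/
noncomputable def sh (f : ℕ → PolA n) : ℕ → PolA n
  | 0 => 0
  | d + 1 => f d

lemma sh_map (F : PolA n →ₗ[ℂ] PolA n) (f : ℕ → PolA n) (d : ℕ) :
    F (sh f d) = sh (fun d => F (f d)) d := by
  cases d <;> simp [sh]

lemma sh_add (f g : ℕ → PolA n) (d : ℕ) :
    sh (fun d => f d + g d) d = sh f d + sh g d := by
  cases d <;> simp [sh]

lemma shift_one (p : ℕ) (P Q : ℕ → Prop) [DecidablePred P] [DecidablePred Q]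
    (hPQ : ∀ m, P (m + 1) ↔ Q m) (hQ : ¬ Q (p + 1)) (f : ℕ → PolA n) :
    ∑ m ∈ range (p + 2), (if P m then sh f m else 0) =
      ∑ m ∈ range (p + 2), (if Q m then f m else 0) := by
  rw [sum_range_succ', sum_range_succ (fun m => if Q m then f m else 0) (p + 1), if_neg hQ]
  simp [sh, hPQ]

lemma comm_congr (s t : Finset ℕ) (f g : ℕ → ℕ → PolA n)
    (h : ∀ b, ∑ a ∈ s, f a b = ∑ a ∈ s, g a b) :
    ∑ a ∈ s, ∑ b ∈ t, f a b = ∑ a ∈ s, ∑ b ∈ t, g a b := by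
  rw [sum_comm, sum_comm (s := s)]
  exact sum_congr rfl fun b _ => h b

lemma S_sh_m (p : ℕ) (f : ℕ → ℕ → ℕ → ℕ → PolA n) :
    S (p + 2) (p + 1) (fun i j k m => sh (fun m => f i j k m) m) = S (p + 2) p f := by
  refine sum_congr rfl fun i _ => sum_congr rfl fun j _ => sum_congr rfl fun k _ => ?_
  exact shift_one p _ _ (by intro m; omega) (by omega) _

lemma S_sh_k (p : ℕ) (f : ℕ → ℕ → ℕ → ℕ → PolA n) :
    S (p + 2) (p + 1) (fun i j k m => sh (fun k => f i j k m) k) = S (p + 2) p f := by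
  refine sum_congr rfl fun i _ => sum_congr rfl fun j _ => comm_congr _ _ _ _ fun m => ?_
  exact shift_one p _ _ (by intro m; omega) (by omega) (fun k => f i j k m)

lemma S_sh_j (p : ℕ) (f : ℕ → ℕ → ℕ → ℕ → PolA n) :
    S (p + 2) (p + 1) (fun i j k m => sh (fun j => f i j k m) j) = S (p + 2) p f := by
  refine sum_congr rfl fun i _ => comm_congr _ _ _ _ fun k => comm_congr _ _ _ _ fun m => ?_
  exact shift_one p _ _ (by intro m; omega) (by omega) (fun j => f i j k m)

lemma S_sh_i (p : ℕ) (f : ℕ → ℕ → ℕ → ℕ → PolA n) :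
    S (p + 2) (p + 1) (fun i j k m => sh (fun i => f i j k m) i) = S (p + 2) p f := by
  refine comm_congr _ _ _ _ fun j => comm_congr _ _ _ _ fun k => comm_congr _ _ _ _ fun m => ?_
  exact shift_one p _ _ (by intro m; omega) (by omega) (fun i => f i j k m)

lemma S_mk (p : ℕ) (f : ℕ → ℕ → ℕ → ℕ → PolA n) :
    S (p + 1) p (fun i j k m => sh (fun m => f i j k m) m) =
      S (p + 1) p (fun i j k m => sh (fun k => f i j k m) k) := by
  cases p with
  | zero => simp [S, sh]
  | succ p => rw [S_sh_m, S_sh_k]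

lemma S_ik (p : ℕ) (f : ℕ → ℕ → ℕ → ℕ → PolA n) :
    S (p + 1) p (fun i j k m => sh (fun i => f i j k m) i) =
      S (p + 1) p (fun i j k m => sh (fun k => f i j k m) k) := by
  cases p with
  | zero => simp [S, sh]
  | succ p => rw [S_sh_i, S_sh_k]

lemma S_jk (p : ℕ) (f : ℕ → ℕ → ℕ → ℕ → PolA n) :
    S (p + 1) p (fun i j k m => sh (fun j => f i j k m) j) =
      S (p + 1) p (fun i j k m => sh (fun k => f i j k m) k) := by
  cases p with
  | zero => simp [S, sh]
  | succ p => rw [S_sh_j, S_sh_k]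

lemma S_map (F : PolA n →ₗ[ℂ] PolA n) (N p : ℕ) (f : ℕ → ℕ → ℕ → ℕ → PolA n) :
    F (S N p f) = S N p (fun i j k m => F (f i j k m)) := by
  simp only [S, map_sum]
  refine sum_congr rfl fun i _ => sum_congr rfl fun j _ => sum_congr rfl fun k _ =>
    sum_congr rfl fun m _ => ?_
  split_ifs <;> simp

lemma C_eq (lam : ℂ) (p : ℕ) (φ ψ : PolA n) : C n lam p φ ψ =
    S (p + 1) p (fun i j k m => bgL n lam m (NL n k (bhL n lam i φ) (bhL n lam j ψ))) := by
  simp only [C, S, bg_eq, bh_eq, N_eq]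

/-- Abstract equivariance argument. -/
lemma equivar (lam : ℂ) (H T : PolA n →ₗ[ℂ] PolA n)
    (h1 : ∀ d φ, bhL n lam d (H φ) = H (bhL n lam d φ) + sh (fun d => T (bhL n lam d φ)) d)
    (h2 : ∀ d φ, H (bgL n lam d φ) = bgL n lam d (H φ) + sh (fun d => bgL n lam d (T φ)) d)
    (h3 : ∀ k a b, H (NL n k a b) + sh (fun k => T (NL n k a b)) k =
      NL n k (H a) b + NL n k a (H b) + sh (fun k => NL n k (T a) b + NL n k a (T b)) k)
    (p : ℕ) (φ ψ : PolA n) :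
    H (C n lam p φ ψ) = C n lam p (H φ) ψ + C n lam p φ (H ψ) := by
  simp only [C_eq, S_map, h2, S_add, S_mk]
  rw [← S_add]
  simp only [← sh_map (bgL n lam _), ← map_add, h3]
  simp only [h1, map_add, LinearMap.add_apply, S_add, sh_map, sh_add]
  have e1 : ∀ k i b, NL n k (sh (fun d => T (bhL n lam d φ)) i) b =
      sh (fun d => NL n k (T (bhL n lam d φ)) b) i := by
    intro k i b; exact sh_map ((NL n k).flip b) _ _
  simp only [e1, sh_map]
  rw [S_ik p (fun i j k m => bgL n lam m (NL n k (T (bhL n lam i φ)) (bhL n lam j ψ))),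
    S_jk p (fun i j k m => bgL n lam m (NL n k (bhL n lam i φ) (T (bhL n lam j ψ))))]
  abel

/-- `{μ, ·}` as a linear map. -/
noncomputable def pbL (μ : PolA n) : PolA n →ₗ[ℂ] PolA n :=
  ∑ l, (LinearMap.mulLeft ℂ (dx l μ) ∘ₗ du l - LinearMap.mulLeft ℂ (du l μ) ∘ₗ dx l)

lemma pbL_apply (μ φ : PolA n) : pbL μ φ = ∑ l, (dx l μ * du l φ - du l μ * dx l φ) := by
  simp [pbL, LinearMap.sum_apply]

lemma pb_eq (μ φ : PolA n) : pb μ φ = pbL μ φ := by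
  rw [pbL_apply]; rfl

/-- The case without correction term. -/
lemma equivar_zero (lam : ℂ) (H : PolA n →ₗ[ℂ] PolA n)
    (hc : ∀ c φ, H (cE c φ) = cE c (H φ)) (hD : ∀ φ, H (DL n φ) = DL n (H φ))
    (hM : ∀ k a b, H (Mop n k a b) = Mop n k (H a) b + Mop n k a (H b))
    (p : ℕ) (φ ψ : PolA n) :
    H (C n lam p φ ψ) = C n lam p (H φ) ψ + C n lam p φ (H ψ) := by
  have hDd : ∀ (d : ℕ) φ, H ((DL n ^ d) φ) = (DL n ^ d) (H φ) := by
    intro d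
    induction d with
    | zero => intro φ; rfl
    | succ d ih => intro φ; rw [pow_succ, Module.End.mul_apply, Module.End.mul_apply, ih, hD]
  have hs : ∀ d, sh (fun _ => (0 : PolA n)) d = 0 := by intro d; cases d <;> rfl
  refine equivar lam H 0 ?_ ?_ ?_ p φ ψ
  · intro d φ
    simp only [LinearMap.zero_apply, hs, add_zero, bhL, LinearMap.comp_apply, cEL_apply, hc, hDd]
  · intro d φ
    simp only [LinearMap.zero_apply, hs, add_zero, bgL, LinearMap.comp_apply, cEL_apply, hc, hDd,
      map_zero]
  · intro k a b
    simp only [LinearMap.zero_apply, hs, add_zero, NL, LinearMap.smul_apply, map_smul, hM,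
      map_zero, smul_add, smul_zero]

lemma equivar_trans (lam : ℂ) (i : Fin n) (p : ℕ) (φ ψ : PolA n) :
    du i (C n lam p φ ψ) = C n lam p (du i φ) ψ + C n lam p φ (du i ψ) :=
  equivar_zero lam (du i) (fun c φ => du_cE c i φ) (fun φ => (DL_du i φ).symm)
    (fun k a b => du_M i k a b) p φ ψ

/-- Linear vector fields. -/
noncomputable def HL (i j : Fin n) : PolA n →ₗ[ℂ] PolA n :=
  LinearMap.mulLeft ℂ (uu i) ∘ₗ du j - LinearMap.mulLeft ℂ (xx j) ∘ₗ dx i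

lemma HL_apply (i j : Fin n) (a : PolA n) : HL i j a = uu i * du j a - xx j * dx i a := rfl

lemma equivar_lin (lam : ℂ) (i j : Fin n) (p : ℕ) (φ ψ : PolA n) :
    HL i j (C n lam p φ ψ) = C n lam p (HL i j φ) ψ + C n lam p φ (HL i j ψ) := by
  refine equivar_zero lam (HL i j) ?_ ?_ ?_ p φ ψ
  · intro c φ
    simp only [HL_apply, du_cE, dx_cE, cE_sub, cE_uu, cE_xx]
  · intro φ
    simp only [HL_apply, map_sub, DL_uu, DL_xx, DL_du, DL_dx, dx_du]
    ring
  · intro k a b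
    simp only [HL_apply, du_M, dx_M, map_sub, LinearMap.sub_apply, M_ul, M_ur, M_xl, M_xr]
    ring

/-- Quadratic vector fields. -/
noncomputable def HP (i : Fin n) : PolA n →ₗ[ℂ] PolA n :=
  ∑ l, (LinearMap.mulLeft ℂ (uu i) ∘ₗ LinearMap.mulLeft ℂ (uu l) ∘ₗ du l -
    LinearMap.mulLeft ℂ (uu l) ∘ₗ LinearMap.mulLeft ℂ (xx l) ∘ₗ dx i -
    LinearMap.mulLeft ℂ (uu i) ∘ₗ LinearMap.mulLeft ℂ (xx l) ∘ₗ dx l)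

lemma HP_apply (i : Fin n) (a : PolA n) : HP i a =
    ∑ l, (uu i * (uu l * du l a) - uu l * (xx l * dx i a) - uu i * (xx l * dx l a)) := by
  simp [HP, LinearMap.sum_apply]

/-- The correction operator. -/
noncomputable def TP (lam : ℂ) (i : Fin n) : PolA n →ₗ[ℂ] PolA n :=
  -(cEL n (fun m => (m : ℂ) + lam * ((n : ℂ) + 1)) ∘ₗ dx i)

lemma TP_apply (lam : ℂ) (i : Fin n) (a : PolA n) :
    TP lam i a = -cE (fun m => (m : ℂ) + lam * ((n : ℂ) + 1)) (dx i a) := rfl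

lemma TP_apply' (lam : ℂ) (i : Fin n) (a : PolA n) :
    TP lam i a = -(∑ l, xx l * dx l (dx i a) + (lam * ((n : ℂ) + 1)) • dx i a) := by
  rw [TP_apply, euler]
  congr 1
  ext d
  simp only [coeff_cE, coeff_add, coeff_smul, smul_eq_mul]
  ring

lemma HP_cE (i : Fin n) (c : ℕ → ℂ) (φ : PolA n) : HP i (cE c φ) = cE c (HP i φ) := by
  rw [HP_apply, HP_apply, ← cEL_apply c (∑ l, _), map_sum]
  simp only [cEL_apply, du_cE, dx_cE, cE_sub, cE_uu, cE_xx]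

lemma DL_HP (i : Fin n) (φ : PolA n) : DL n (HP i φ) =
    HP i (DL n φ) - cE (fun m => 2 * (m : ℂ) + n + 1) (dx i φ) := by
  have e : cE (fun m => 2 * (m : ℂ) + n + 1) (dx i φ) =
      ∑ l : Fin n, (2 * (xx l * dx l (dx i φ)) + dx i φ + (if l = i then dx i φ else 0)) := by
    rw [sum_add_distrib, sum_add_distrib, ← mul_sum, euler, sum_ite_eq' univ i]
    simp only [mem_univ, if_true, sum_const, card_univ, Fintype.card_fin]
    ext d
    rw [← Nat.cast_smul_eq_nsmul ℂ, two_mul]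
    simp only [coeff_cE, coeff_add, coeff_smul, smul_eq_mul]
    ring
  rw [e, HP_apply, HP_apply, map_sum, ← sum_sub_distrib]
  refine sum_congr rfl fun l _ => ?_
  simp only [map_sub, DL_uu, DL_xx, dx_mul, DL_du, DL_dx, dx_uu, dx_xx, dx_du]
  rw [dx_dx i l]
  by_cases h : l = i
  · subst h; simp; ring
  · simp [h, Ne.symm h]; ring

lemma DLpow_HP (i : Fin n) (d : ℕ) (φ : PolA n) : (DL n ^ (d + 1)) (HP i φ) =
    HP i ((DL n ^ (d + 1)) φ) -
      cE (fun m => ((d : ℂ) + 1) * (2 * (m : ℂ) + n + (d + 1))) (dx i ((DL n ^ d) φ)) := by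
  induction d with
  | zero =>
    simp only [zero_add, pow_one, pow_zero, Module.End.one_apply, DL_HP]
    congr 2
    ext m; push_cast; ring
  | succ d ih =>
    rw [pow_succ', Module.End.mul_apply, ih, map_sub, DL_HP, DL_cE, DL_dx, ← Module.End.mul_apply (DL n),
      ← pow_succ', ← Module.End.mul_apply (DL n), ← pow_succ', sub_sub]
    congr 1
    ext s
    simp only [coeff_cE, coeff_add]
    push_cast; ring

lemma den_ne (m j d : ℕ) : (2 * (m : ℂ) + (j : ℂ) + (n : ℂ) + ((d : ℂ) + 1)) ≠ 0 := by
  have : (2 * (m : ℂ) + (j : ℂ) + (n : ℂ) + ((d : ℂ) + 1)) = ((2 * m + j + n + d + 1 : ℕ) : ℂ) := by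
    push_cast; ring
  rw [this]
  exact Nat.cast_ne_zero.mpr (by omega)

lemma scal_aux (f e x y P : ℂ) (hf : f ≠ 0) (he : e ≠ 0) (hy : y ≠ 0) :
    ((e * f)⁻¹ * (P * (x / y))) * (e * y) = x * (f⁻¹ * P) := by
  field_simp

lemma hScal_rec (lam : ℂ) (d m : ℕ) :
    hScal n lam (d + 1) m * (((d : ℂ) + 1) * (2 * (m : ℂ) + n + (d + 1))) =
      ((m : ℂ) + lam * ((n : ℂ) + 1)) * hScal n lam d (m + 1) := by
  rw [hScal, hScal, prod_range_succ', Nat.factorial_succ]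
  have h0 := den_ne (n := n) m 0 d
  have h1 : (d.factorial : ℂ) ≠ 0 := Nat.cast_ne_zero.mpr (Nat.factorial_ne_zero d)
  have h2 : (d : ℂ) + 1 ≠ 0 := by exact_mod_cast Nat.succ_ne_zero d
  have hp : ∏ k ∈ range d, ((m : ℂ) + ((k + 1 : ℕ) : ℂ) + lam * ((n : ℂ) + 1)) /
        (2 * (m : ℂ) + ((k + 1 : ℕ) : ℂ) + (n : ℂ) + ((d + 1 : ℕ) : ℂ)) =
      ∏ j ∈ range d, (((m + 1 : ℕ) : ℂ) + (j : ℂ) + lam * ((n : ℂ) + 1)) /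
        (2 * ((m + 1 : ℕ) : ℂ) + (j : ℂ) + (n : ℂ) + (d : ℂ)) := by
    refine prod_congr rfl fun k _ => ?_
    congr 1 <;> push_cast <;> ring
  rw [hp]
  push_cast at h0 ⊢
  simp only [add_zero] at h0 ⊢
  exact scal_aux _ _ _ _ _ h1 h2 h0

lemma gScal_rec (lam : ℂ) (d m : ℕ) :
    gScal n lam (d + 1) m * (((d : ℂ) + 1) * (2 * (m : ℂ) + n + (d + 1))) =
      -(gScal n lam d m * (((m + d : ℕ) : ℂ) + lam * ((n : ℂ) + 1))) := by
  rw [gScal, gScal, prod_range_succ, Nat.factorial_succ]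
  have h0 : 2 * (m : ℂ) + (d : ℂ) + n + 1 ≠ 0 := by
    have := den_ne (n := n) m d 0
    simpa using this
  have h1 : (d.factorial : ℂ) ≠ 0 := Nat.cast_ne_zero.mpr (Nat.factorial_ne_zero d)
  have h2 : (d : ℂ) + 1 ≠ 0 := by exact_mod_cast Nat.succ_ne_zero d
  push_cast
  have e : (2 * (m : ℂ) + n + (d + 1)) = 2 * (m : ℂ) + (d : ℂ) + n + 1 := by ring
  rw [e, scal_aux _ _ _ _ _ h1 h2 h0]
  ring

lemma DLpow_cE (c : ℕ → ℂ) (d : ℕ) (φ : PolA n) :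
    (DL n ^ d) (cE c φ) = cE (fun m => c (m + d)) ((DL n ^ d) φ) := by
  induction d with
  | zero => rfl
  | succ d ih =>
    rw [pow_succ', Module.End.mul_apply, ih, DL_cE, Module.End.mul_apply]
    congr 1
    ext m; congr 1; omega

lemma DLpow_dx (i : Fin n) (d : ℕ) (φ : PolA n) :
    (DL n ^ d) (dx i φ) = dx i ((DL n ^ d) φ) := by
  induction d with
  | zero => rfl
  | succ d ih => rw [pow_succ', Module.End.mul_apply, ih, DL_dx, Module.End.mul_apply]

lemma HP_M (i : Fin n) (k : ℕ) (a b : PolA n) :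
    HP i (Mop n k a b) = Mop n k (HP i a) b + Mop n k a (HP i b) +
      (k : ℂ) • (-(((k - 1 : ℕ) : ℂ) • Mop n (k - 1) (dx i a) b) +
        ∑ l, xx l * (Mop n (k - 1) (dx l a) (dx i b) + Mop n (k - 1) (dx i a) (dx l b))) := by
  rw [← M_fold (k - 1) (dx i a) b]
  simp only [HP_apply, map_sum, LinearMap.sum_apply]
  rw [← sum_neg_distrib, ← sum_add_distrib, ← sum_add_distrib, smul_sum, ← sum_add_distrib]
  refine sum_congr rfl fun l _ => ?_
  simp only [du_M, dx_M, map_sub, LinearMap.sub_apply, M_ul, M_ur, M_xl, M_xr, dx_dx i l]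
  simp only [smul_add, smul_neg, mul_add, mul_smul_comm, dx_dx i l]
  ring

lemma TP_M (lam : ℂ) (i : Fin n) (k : ℕ) (a b : PolA n) :
    Mop n k (TP lam i a) b + Mop n k a (TP lam i b) - TP lam i (Mop n k a b) =
      -((k : ℂ) • Mop n k (dx i a) b) +
        ∑ l, xx l * (Mop n k (dx l a) (dx i b) + Mop n k (dx i a) (dx l b)) := by
  rw [← M_fold k (dx i a) b]
  simp only [TP_apply', map_neg, map_add, map_smul, map_sum, LinearMap.neg_apply,
    LinearMap.add_apply, LinearMap.smul_apply, LinearMap.sum_apply, M_xl, M_xr, dx_M, smul_add,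
    mul_add, sum_add_distrib]
  abel

lemma equivar_proj (lam : ℂ) (i : Fin n) (p : ℕ) (φ ψ : PolA n) :
    HP i (C n lam p φ ψ) = C n lam p (HP i φ) ψ + C n lam p φ (HP i ψ) := by
  refine equivar lam (HP i) (TP lam i) ?_ ?_ ?_ p φ ψ
  · intro d φ
    cases d with
    | zero => simp [sh, bhL, cEL_apply, HP_cE]
    | succ d =>
      simp only [sh, bhL, LinearMap.comp_apply, cEL_apply, DLpow_HP, HP_cE, cE_sub, TP_apply,
        dx_cE, cE_cE, hScal_rec]
      rw [sub_eq_add_neg]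
  · intro d φ
    cases d with
    | zero => simp [sh, bgL, cEL_apply, HP_cE]
    | succ d =>
      simp only [sh, bgL, LinearMap.comp_apply, cEL_apply, DLpow_HP, HP_cE, cE_sub, TP_apply,
        dx_cE, cE_cE, gScal_rec, map_neg, DLpow_cE, DLpow_dx]
      ext s
      simp only [coeff_add, coeff_sub, coeff_cE, coeff_neg]
      ring
  · intro k a b
    cases k with
    | zero =>
      have := HP_M i 0 a b
      simpa [sh, NL] using this
    | succ k =>
      have h := HP_M i (k + 1) a b
      have ht := TP_M lam i k a b
      simp only [Nat.add_sub_cancel] at h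
      rw [← ht] at h
      have h1 : (k.factorial : ℂ) ≠ 0 := Nat.cast_ne_zero.mpr (Nat.factorial_ne_zero k)
      have h2 : ((k + 1 : ℕ) : ℂ) ≠ 0 := by exact_mod_cast Nat.succ_ne_zero k
      have h3 : (((k + 1).factorial : ℕ) : ℂ)⁻¹ * ((k + 1 : ℕ) : ℂ) = (k.factorial : ℂ)⁻¹ := by
        rw [Nat.factorial_succ]
        push_cast at h2 ⊢
        field_simp
      simp only [sh, NL, LinearMap.smul_apply, map_smul, h, smul_add, smul_smul, h3, smul_sub]
      abel

lemma pb_trans (i : Fin n) : pbL (X (Sum.inr i) : PolA n) = du i := by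
  refine LinearMap.ext fun φ => ?_
  change pbL (xx i) φ = _
  simp [pbL_apply, dx_xx, du_xx]

lemma pb_lin (i j : Fin n) : pbL (X (Sum.inl i) * X (Sum.inr j) : PolA n) = HL i j := by
  refine LinearMap.ext fun φ => ?_
  change pbL (uu i * xx j) φ = _
  simp only [pbL_apply, dx_mul, du_mul, dx_xx, du_xx, dx_uu, du_uu, HL_apply]
  simp

lemma pb_proj (i : Fin n) :
    pbL (X (Sum.inl i) * ∑ k : Fin n, X (Sum.inl k) * X (Sum.inr k) : PolA n) = HP i := by
  refine LinearMap.ext fun φ => ?_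
  change pbL (uu i * ∑ k, uu k * xx k) φ = _
  simp only [pbL_apply, dx_mul, du_mul, dx_xx, du_xx, dx_uu, du_uu, HP_apply, map_sum]
  simp only [mul_ite, mul_one, mul_zero, add_zero, zero_add, sum_ite_eq, mem_univ, if_true,
    add_mul, ite_mul, zero_mul, sum_sub_distrib, sum_add_distrib, sum_mul]
  simp only [← mul_assoc]
  rw [← sub_sub, sub_right_comm, sum_ite_eq' univ i]
  simp

lemma C_add_left (lam : ℂ) (p : ℕ) (φ φ' ψ : PolA n) :
    C n lam p (φ + φ') ψ = C n lam p φ ψ + C n lam p φ' ψ := by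
  simp only [C_eq, ← S_add, map_add, LinearMap.add_apply]
lemma C_add_right (lam : ℂ) (p : ℕ) (φ ψ ψ' : PolA n) :
    C n lam p φ (ψ + ψ') = C n lam p φ ψ + C n lam p φ ψ' := by
  simp only [C_eq, ← S_add, map_add]
lemma C_smul_left (lam : ℂ) (p : ℕ) (c : ℂ) (φ ψ : PolA n) :
    C n lam p (c • φ) ψ = c • C n lam p φ ψ := by
  have := S_map (c • LinearMap.id : PolA n →ₗ[ℂ] PolA n) (p + 1) p
    (fun i j k m => bgL n lam m (NL n k (bhL n lam i φ) (bhL n lam j ψ)))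
  simp only [LinearMap.smul_apply, LinearMap.id_apply] at this
  rw [C_eq, C_eq, this]
  simp only [map_smul, LinearMap.smul_apply]
lemma C_smul_right (lam : ℂ) (p : ℕ) (c : ℂ) (φ ψ : PolA n) :
    C n lam p φ (c • ψ) = c • C n lam p φ ψ := by
  have := S_map (c • LinearMap.id : PolA n →ₗ[ℂ] PolA n) (p + 1) p
    (fun i j k m => bgL n lam m (NL n k (bhL n lam i φ) (bhL n lam j ψ)))
  simp only [LinearMap.smul_apply, LinearMap.id_apply] at this
  rw [C_eq, C_eq, this]
  simp only [map_smul]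

lemma pbL_add (μ ν φ : PolA n) : pbL (μ + ν) φ = pbL μ φ + pbL ν φ := by
  simp only [pbL_apply, ← sum_add_distrib, map_add]
  exact sum_congr rfl fun l _ => by ring
lemma pbL_smul (c : ℂ) (μ φ : PolA n) : pbL (c • μ) φ = c • pbL μ φ := by
  simp only [pbL_apply, smul_sum, map_smul, smul_sub, smul_mul_assoc]

end LO

/-- each `C^λ_p` is infinitesimally equivariant for the Hamiltonian
`sl_{n+1}(ℝ)`-action: `{μ, C^λ_p(φ,ψ)} = C^λ_p({μ,φ},ψ) + C^λ_p(φ,{μ,ψ})` for all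
momentum functions `μ ∈ M`. -/
theorem stmt_10 (n : ℕ) (hn : 1 ≤ n) (lam : ℂ) (p : ℕ) (μ : PolA n)
    (hμ : μ ∈ LO.momSpan n) (φ ψ : PolA n) :
    LO.pb μ (LO.C n lam p φ ψ) =
      LO.C n lam p (LO.pb μ φ) ψ + LO.C n lam p φ (LO.pb μ ψ) := by
  simp only [LO.pb_eq]
  rw [LO.momSpan] at hμ
  induction hμ using Submodule.span_induction with
  | mem x hx =>
    rcases hx with (⟨i, rfl⟩ | ⟨⟨i, j⟩, rfl⟩) | ⟨i, rfl⟩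
    · simp only [LO.pb_trans, LO.equivar_trans]
    · simp only [LO.pb_lin, LO.equivar_lin]
    · simp only [LO.pb_proj, LO.equivar_proj]
  | zero =>
    have h : ∀ φ : PolA n, LO.pbL 0 φ = (0 : ℂ) • φ := by
      intro φ; simp [LO.pbL_apply]
    simp only [h, LO.C_smul_left, LO.C_smul_right]
    simp
  | add x y _ _ hx hy =>
    simp only [LO.pbL_add, LO.C_add_left, LO.C_add_right, hx, hy]
    abel
  | smul c x _ hx =>
    simp only [LO.pbL_smul, LO.C_smul_left, LO.C_smul_right, hx, smul_add]
end

section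
/- (Proposition 3) Let R be the unital ℂ-subalgebra of A generated by the momentum functions M. Then for every λ ∈ ℂ, every p ≥ 0, and all φ, ψ ∈ R, one has C^λ_p(φ,ψ) ∈ R; that is, ⋆_λ restricts to a graded star product on the momentum algebra R. -/
open MvPolynomial

namespace LOP
open LO Finset

/-! ### Scalars -/

noncomputable def dpp (x : ℂ) (k : ℕ) : ℂ := ∏ r ∈ range k, (x - ((r : ℂ) + 1))

lemma dpp_zero (x : ℂ) : dpp x 0 = 1 := by simp [dpp]

lemma dpp_succ (x : ℂ) (k : ℕ) : dpp x (k + 1) = dpp x k * (x - ((k : ℂ) + 1)) := by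
  simp [dpp, prod_range_succ]

lemma dpp_succ' (x : ℂ) (k : ℕ) : dpp x (k + 1) = (x - 1) * dpp (x - 1) k := by
  simp only [dpp, prod_range_succ']
  rw [mul_comm]
  congr 1
  · simp
  · apply prod_congr rfl
    intro i _
    push_cast
    ring

lemma dpp_add (x : ℂ) (k j : ℕ) : dpp x (k + j) = dpp x k * dpp (x - k) j := by
  induction j with
  | zero => simp [dpp_zero]
  | succ j ih =>
    rw [← add_assoc, dpp_succ, ih, dpp_succ]
    push_cast
    ring

lemma dpp_reflect (x : ℂ) (k : ℕ) : dpp x k = ∏ j ∈ range k, (x - k + j) := by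
  rw [dpp, ← Finset.prod_range_reflect]
  apply prod_congr rfl
  intro j hj
  have h : k - 1 - j + 1 + j = k := by have := mem_range.1 hj; omega
  have h2 : ((k - 1 - j : ℕ) : ℂ) + 1 + j = k := by exact_mod_cast h
  linear_combination -h2

lemma dpp_ne_zero (z k : ℕ) (h : k < z) : dpp (z : ℂ) k ≠ 0 := by
  rw [dpp, prod_ne_zero_iff]
  intro r hr h0
  have h1 := mem_range.1 hr
  have h2 : (z : ℂ) = ((r + 1 : ℕ) : ℂ) := by push_cast; linear_combination h0
  have h3 := Nat.cast_injective h2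
  omega

lemma alt_sum (p : ℕ) : ∀ (q : ℕ) (z : ℂ), q < p →
    ∑ i ∈ range (p + 1), (-1 : ℂ) ^ i * (p.choose i : ℂ) * dpp (z - i) q = 0 := by
  induction p with
  | zero => intro q z h; omega
  | succ p ih =>
    intro q z h
    have key : ∀ f : ℕ → ℂ, ∑ i ∈ range (p + 2), (-1 : ℂ) ^ i * ((p + 1).choose i : ℂ) * f i
        = ∑ i ∈ range (p + 1), (-1 : ℂ) ^ i * (p.choose i : ℂ) * (f i - f (i + 1)) := by
      intro f
      rw [sum_range_succ']
      simp only [Nat.choose_succ_succ, Nat.cast_add, mul_sub, sum_sub_distrib, mul_add, add_mul,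
        sum_add_distrib]
      have e : ∑ i ∈ range (p + 1), (-1 : ℂ) ^ (i + 1) * (p.choose (i + 1) : ℂ) * f (i + 1)
          + (-1 : ℂ) ^ 0 * ((p + 1).choose 0 : ℂ) * f 0
          = ∑ i ∈ range (p + 1), (-1 : ℂ) ^ i * (p.choose i : ℂ) * f i := by
        rw [sum_range_succ, sum_range_succ' (n := p)]
        simp
      rw [add_assoc, e, sub_eq_add_neg, add_comm, ← sum_neg_distrib]
      congr 1
      apply sum_congr rfl
      intro i _
      ring
    rw [key (fun i => dpp (z - i) q)]
    cases q with
    | zero => simp [dpp_zero]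
    | succ q =>
      have := ih q (z - 1) (by omega)
      rw [← mul_zero ((q : ℂ) + 1), ← this, mul_sum]
      apply sum_congr rfl
      intro i _
      have e1 : dpp (z - i) (q + 1) = (z - i - 1) * dpp (z - 1 - i) q := by
        rw [dpp_succ', show z - i - 1 = z - 1 - i by ring]
      have e2 : dpp (z - (i + 1 : ℕ)) (q + 1) = dpp (z - 1 - i) q * (z - 1 - i - (q + 1)) := by
        rw [dpp_succ, show z - ((i + 1 : ℕ) : ℂ) = z - 1 - i by push_cast; ring]
      simp only [e1, e2]
      ring

lemma hScal_eq (n : ℕ) (lam : ℂ) (d m : ℕ) (h : d ≤ m) :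
    hScal n lam d (m - d) = dpp (lam * (n + 1) + m) d /
      ((d.factorial : ℂ) * dpp ((2 * m + n : ℕ) : ℂ) d) := by
  rw [hScal, dpp_reflect, dpp_reflect, mul_comm (d.factorial : ℂ), ← div_div, ← prod_div_distrib,
    div_eq_mul_inv _ (d.factorial : ℂ), mul_comm]
  congr 1
  apply prod_congr rfl
  intro j _
  push_cast [h]
  congr 1 <;> ring

lemma gScal_eq (n : ℕ) (lam : ℂ) (d m : ℕ) :
    gScal n lam d m = (-1) ^ d * dpp (lam * (n + 1) + m + d) d /
      ((d.factorial : ℂ) * dpp ((2 * m + n + 1 + d : ℕ) : ℂ) d) := by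
  have e : ((-1 : ℂ)) ^ d = ∏ j ∈ range d, (-1 : ℂ) := by simp
  rw [gScal, dpp_reflect, dpp_reflect, e, ← prod_mul_distrib, mul_comm (d.factorial : ℂ), ← div_div,
    ← prod_div_distrib, div_eq_mul_inv _ (d.factorial : ℂ), mul_comm]
  congr 1
  apply prod_congr rfl
  intro j _
  push_cast
  congr 1 <;> ring

lemma gh_sum (n : ℕ) (lam : ℂ) (p M : ℕ) (hp : 1 ≤ p) (hM : p ≤ M) :
    ∑ x ∈ antidiagonal p, gScal n lam x.2 (M - p) * hScal n lam x.1 (M - x.1) = 0 := by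
  rw [Finset.Nat.sum_antidiagonal_eq_sum_range_succ
    (fun i m => gScal n lam m (M - p) * hScal n lam i (M - i))]
  have key := alt_sum p (p - 1) ((2 * M + n : ℕ) : ℂ) (by omega)
  have : ∀ i ∈ range (p + 1), gScal n lam (p - i) (M - p) * hScal n lam i (M - i) =
      ((-1) ^ p * dpp (lam * (n + 1) + M) p / ((p.factorial : ℂ) * dpp ((2 * M + n : ℕ) : ℂ) (2 * p - 1)))
      * ((-1 : ℂ) ^ i * (p.choose i : ℂ) * dpp (((2 * M + n : ℕ) : ℂ) - i) (p - 1)) := by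
    intro i hi
    have hi' : i ≤ p := by have := mem_range.1 hi; omega
    obtain ⟨m, rfl⟩ := Nat.exists_eq_add_of_le hi'
    obtain ⟨N, rfl⟩ := Nat.exists_eq_add_of_le hM
    rw [hScal_eq _ _ _ _ (by omega), gScal_eq]
    have s1 : i + m - i = m := by omega
    have s2 : i + m + N - (i + m) = N := by omega
    rw [s1, s2]
    have f1 : dpp (lam * (n + 1) + ((i + m + N : ℕ) : ℂ)) (i + m) =
      dpp (lam * (n + 1) + ((i + m + N : ℕ) : ℂ)) i * dpp (lam * (n + 1) + (N : ℂ) + m) m := by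
      rw [dpp_add]; congr 2; push_cast; ring
    have f2 : dpp ((2 * (i + m + N) + n : ℕ) : ℂ) (2 * (i + m) - 1) =
      dpp ((2 * (i + m + N) + n : ℕ) : ℂ) i *
       (dpp (((2 * (i + m + N) + n : ℕ) : ℂ) - i) (i + m - 1) *
        dpp ((2 * N + n + 1 + m : ℕ) : ℂ) m) := by
      rw [show 2 * (i + m) - 1 = i + ((i + m - 1) + m) by omega, dpp_add, dpp_add]
      congr 3
      push_cast [hp]; ring
    have f3 : (((i + m).factorial : ℕ) : ℂ) = ((i + m).choose i : ℂ) * i.factorial * m.factorial := by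
      have := Nat.choose_mul_factorial_mul_factorial (n := i + m) (k := i) (by omega)
      rw [s1] at this
      exact_mod_cast this.symm
    have n1 : dpp ((2 * (i + m + N) + n : ℕ) : ℂ) (2 * (i + m) - 1) ≠ 0 := dpp_ne_zero _ _ (by omega)
    have n2 : (((i + m).factorial : ℕ) : ℂ) ≠ 0 := by exact_mod_cast Nat.factorial_ne_zero _
    have n3 : ((-1 : ℂ)) ^ i * (-1) ^ i = 1 := by rw [← mul_pow]; simp
    rw [f2] at n1
    rw [f3] at n2
    rw [f1, f2, f3, pow_add]
    simp only [mul_ne_zero_iff] at n1 n2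
    obtain ⟨a1, a2, a3⟩ := n1
    obtain ⟨⟨b1, b2⟩, b3⟩ := n2
    field_simp
    linear_combination (-(dpp (lam * (n + 1) + (N : ℂ) + m) m * dpp (lam * (n + 1) + ((i + m + N : ℕ) : ℂ)) i)) * n3
  rw [sum_congr rfl this, ← mul_sum, key, mul_zero]

noncomputable def tS (x : ℂ) (j : ℕ) : ℂ := (-1) ^ j * dpp x j / (j.factorial : ℂ)

lemma tS_zero (x : ℂ) : tS x 0 = 1 := by simp [tS, dpp_zero]

lemma tS_succ (x : ℂ) (j : ℕ) : ((j : ℂ) + 1) * tS (x + 1) (j + 1) = - x * tS x j := by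
  have : (j.factorial : ℂ) ≠ 0 := by exact_mod_cast Nat.factorial_ne_zero _
  have : (j : ℂ) + 1 ≠ 0 := by exact_mod_cast Nat.succ_ne_zero j
  rw [tS, tS, dpp_succ', Nat.factorial_succ]
  push_cast
  rw [add_sub_cancel_right]
  field_simp
  ring

lemma tS_pascal (x : ℂ) (j : ℕ) : tS (x + 1) (j + 1) = tS x (j + 1) - tS x j := by
  have : (j.factorial : ℂ) ≠ 0 := by exact_mod_cast Nat.factorial_ne_zero _
  have : (j : ℂ) + 1 ≠ 0 := by exact_mod_cast Nat.succ_ne_zero j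
  rw [tS, tS, tS, dpp_succ', dpp_succ, Nat.factorial_succ]
  push_cast
  rw [add_sub_cancel_right]
  field_simp
  ring

/-- coefficients of `Q` -/
noncomputable def dS (n : ℕ) (lam : ℂ) (m k : ℕ) : ℂ :=
  dpp (lam * (n + 1) + m) k / ((k.factorial : ℂ) * dpp ((2 * m + n : ℕ) : ℂ) k)

lemma hS_split (n : ℕ) (lam : ℂ) (m k j : ℕ) (h : k + j ≤ m) :
    hScal n lam (k + j) (m - (k + j)) * (((k + j).factorial : ℂ) *
      ((-1) ^ j * dpp (((2 * m + n : ℕ) : ℂ) - k) j / ((k.factorial : ℂ) * j.factorial)))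
    = dS n lam m k * tS (lam * (n + 1) + ((m - k : ℕ) : ℂ)) j := by
  rw [hScal_eq _ _ _ _ h, dS, tS]
  have n1 : dpp ((2 * m + n : ℕ) : ℂ) (k + j) ≠ 0 := by
    rcases Nat.eq_zero_or_pos m with h0 | h0
    · rw [show k + j = 0 by omega, dpp_zero]; exact one_ne_zero
    · exact dpp_ne_zero (2 * m + n) (k + j) (by omega)
  have n2 : (((k + j).factorial : ℕ) : ℂ) ≠ 0 := by exact_mod_cast Nat.factorial_ne_zero _
  have n3 : ((j.factorial : ℕ) : ℂ) ≠ 0 := by exact_mod_cast Nat.factorial_ne_zero _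
  have n4 : ((k.factorial : ℕ) : ℂ) ≠ 0 := by exact_mod_cast Nat.factorial_ne_zero _
  have e : lam * (n + 1) + ((m - k : ℕ) : ℂ) = lam * (n + 1) + m - k := by
    push_cast [show k ≤ m by omega]; ring
  rw [e]
  rw [dpp_add] at n1 ⊢
  rw [dpp_add _ k j] 
  obtain ⟨a, b⟩ := mul_ne_zero_iff.1 n1
  field_simp

/-! ### Linear versions of the operators -/

variable {n : ℕ}

lemma coeff_cE (c : ℕ → ℂ) (φ : PolA n) (d) : coeff d (cE c φ) = c (xiDeg d) * coeff d φ := by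
  classical
  rw [cE, coeff_sum]
  simp only [coeff_monomial]
  rw [Finset.sum_ite_eq']
  split_ifs with h
  · rfl
  · rw [notMem_support_iff.1 h, mul_zero]

noncomputable def cEL (c : ℕ → ℂ) : PolA n →ₗ[ℂ] PolA n where
  toFun := cE c
  map_add' a b := by ext d; simp [coeff_cE, mul_add]
  map_smul' r a := by ext d; simp [coeff_cE]; ring

lemma Dop_iter (d : ℕ) (φ : PolA n) : Dop^[d] φ = (Dlin n ^ d) φ := by
  have : (Dop : PolA n → PolA n) = Dlin n := by
    funext φ; simp [Dop, Dlin]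
  rw [this, Module.End.pow_apply]

noncomputable def bhL (lam : ℂ) (d : ℕ) : PolA n →ₗ[ℂ] PolA n :=
  cEL (hScal n lam d) ∘ₗ (Dlin n ^ d)

noncomputable def bgL (lam : ℂ) (d : ℕ) : PolA n →ₗ[ℂ] PolA n :=
  cEL (gScal n lam d) ∘ₗ (Dlin n ^ d)

lemma bh_eq (lam : ℂ) (d : ℕ) (φ : PolA n) : bh lam d φ = bhL lam d φ := by
  simp [bh, bhL, cEL, Dop_iter]

lemma bg_eq (lam : ℂ) (d : ℕ) (φ : PolA n) : bg lam d φ = bgL lam d φ := by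
  simp [bg, bgL, cEL, Dop_iter]

lemma Elin_eq : Elin n = cEL (fun m => (m : ℂ)) := by
  apply LinearMap.ext
  intro φ
  induction φ using MvPolynomial.induction_on' with
  | add p q hp hq => rw [map_add, map_add, hp, hq]
  | monomial d r =>
  ext e
  simp only [Elin, LinearMap.comp_apply, LinearMap.sum_apply, LinearMap.mulLeft_apply,
    Derivation.coeFn_coe, X_mul_pderiv_monomial]
  change _ = coeff e (cE _ _)
  rw [coeff_cE, ← Finset.sum_smul, coeff_smul, coeff_monomial]
  split_ifs with h
  · subst h; simp [xiDeg]
  · simp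

lemma Elin_coeff {z : ℂ} {φ : PolA n} (h : Elin n φ = z • φ) (d) :
    coeff d φ = 0 ∨ z = xiDeg d := by
  have := congrArg (coeff d) h
  rw [Elin_eq] at this
  change coeff d (cE _ _) = _ at this
  rw [coeff_cE, coeff_smul, smul_eq_mul] at this
  by_cases h0 : coeff d φ = 0
  · exact Or.inl h0
  · exact Or.inr (mul_right_cancel₀ h0 this).symm

lemma cEL_hom {m : ℕ} {φ : PolA n} (h : Elin n φ = (m : ℂ) • φ) (c : ℕ → ℂ) :
    cEL c φ = c m • φ := by
  ext d
  change coeff d (cE _ _) = _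
  rw [coeff_cE, coeff_smul, smul_eq_mul]
  rcases Elin_coeff h d with h | h
  · simp [h]
  · rw [Nat.cast_injective h]

lemma hom_neg {m p : ℕ} (hmp : m < p) {φ : PolA n} (h : Elin n φ = ((m : ℂ) - p) • φ) :
    φ = 0 := by
  ext d
  rcases Elin_coeff h d with h | h
  · simp [h]
  · have : (m : ℂ) = ((xiDeg d + p : ℕ) : ℂ) := by push_cast; linear_combination h
    have := Nat.cast_injective this
    omega

noncomputable def du (i : Fin n) : PolA n →ₗ[ℂ] PolA n := (pderiv (Sum.inl i)).toLinearMap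
noncomputable def dxi (i : Fin n) : PolA n →ₗ[ℂ] PolA n := (pderiv (Sum.inr i)).toLinearMap

lemma pderiv_comm {σ : Type} (a b : σ) (φ : MvPolynomial σ ℂ) :
    pderiv a (pderiv b φ) = pderiv b (pderiv a φ) := by
  have : ⁅(pderiv (R := ℂ) a), (pderiv (R := ℂ) b)⁆ = 0 := by
    apply MvPolynomial.derivation_ext
    intro i
    classical
    rw [Derivation.commutator_apply]
    simp [pderiv_X, Pi.single_apply, apply_ite]
  have h2 := congrArg (fun D => D φ) this
  simp only [Derivation.commutator_apply, Derivation.coe_zero, Pi.zero_apply] at h2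
  exact sub_eq_zero.1 h2

lemma Elin_Dlin (φ : PolA n) : Elin n (Dlin n φ) = Dlin n (Elin n φ) - Dlin n φ := by
  classical
  simp only [Elin, Dlin, LinearMap.sum_apply, LinearMap.comp_apply, LinearMap.mulLeft_apply,
    Derivation.coeFn_coe, map_sum, Derivation.leibniz, map_add,
    smul_eq_mul, pderiv_X, Finset.mul_sum]
  simp only [Pi.single_apply, Finset.sum_add_distrib, reduceCtorEq, if_false, map_zero, mul_zero, add_zero,
    Sum.inr.injEq, apply_ite (pderiv _), mul_ite, mul_one, map_one, Derivation.map_one_eq_zero, ite_self]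
  rw [Finset.sum_comm]
  simp
  apply Finset.sum_congr rfl
  intro i _
  apply Finset.sum_congr rfl
  intro j _
  rw [pderiv_comm (Sum.inr i) (Sum.inl j), pderiv_comm (Sum.inr i) (Sum.inr j)]

lemma Elin_Dpow {m : ℂ} {φ : PolA n} (h : Elin n φ = m • φ) (d : ℕ) :
    Elin n ((Dlin n ^ d) φ) = (m - d) • (Dlin n ^ d) φ := by
  induction d with
  | zero => simp [h]
  | succ d ih =>
    rw [pow_succ', Module.End.mul_apply, Elin_Dlin, ih, map_smul]
    push_cast
    module

/-- `Q⁻¹ Q = id` -/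
lemma bg_bh (lam : ℂ) {M : ℕ} {φ : PolA n} (h : Elin n φ = (M : ℂ) • φ) (p : ℕ) :
    ∑ x ∈ antidiagonal p, bgL lam x.2 (bhL lam x.1 φ) = if p = 0 then φ else 0 := by
  have key : ∀ x ∈ antidiagonal p, bgL lam x.2 (bhL lam x.1 φ) = if p ≤ M then
      (gScal n lam x.2 (M - p) * hScal n lam x.1 (M - x.1)) • (Dlin n ^ p) φ else 0 := by
    rintro ⟨i, m⟩ hx
    have hx' : i + m = p := mem_antidiagonal.1 hx
    simp only [bgL, bhL, LinearMap.comp_apply]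
    have h1 := Elin_Dpow h i
    have h2 := Elin_Dpow h p
    by_cases hi : i ≤ M
    · have h1' : Elin n ((Dlin n ^ i) φ) = ((M - i : ℕ) : ℂ) • (Dlin n ^ i) φ := by
        rw [h1]; push_cast [hi]; rfl
      rw [cEL_hom h1', map_smul, ← Module.End.mul_apply, ← pow_add, add_comm m i, hx']
      split_ifs with hp
      · have h2' : Elin n ((Dlin n ^ p) φ) = ((M - p : ℕ) : ℂ) • (Dlin n ^ p) φ := by
          rw [h2]; push_cast [hp]; rfl
        rw [map_smul, cEL_hom h2', smul_smul, mul_comm]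
      · rw [hom_neg (by omega) h2]; simp
    · rw [hom_neg (by omega) h1]
      rw [if_neg (by omega)]; simp
  rw [sum_congr rfl key]
  split_ifs with hp h0 h0
  · subst h0
    simp [gScal, hScal]
  · rw [← sum_smul, gh_sum n lam p M (by omega) hp, zero_smul]
  · omega
  · simp

/-! ### The standard product -/

noncomputable def Nr : ℕ → PolA n →ₗ[ℂ] PolA n →ₗ[ℂ] PolA n
  | 0 => LinearMap.mul ℂ _
  | k + 1 => ((k : ℂ) + 1)⁻¹ • ∑ l, (Nr k).compl₁₂ (dxi l) (du l)

lemma Nr_succ (k : ℕ) (φ ψ : PolA n) :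
    Nr (k + 1) φ ψ = ((k : ℂ) + 1)⁻¹ • ∑ l, Nr k (dxi l φ) (du l ψ) := by
  simp [Nr, LinearMap.sum_apply]

lemma Nr_zero (φ ψ : PolA n) : Nr 0 φ ψ = φ * ψ := by
  simp [Nr]

attribute [irreducible] Nr

lemma du_comm (i j : Fin n) (φ : PolA n) : du i (du j φ) = du j (du i φ) := pderiv_comm _ _ _

lemma du_dxi (i j : Fin n) (φ : PolA n) : du i (dxi j φ) = dxi j (du i φ) := pderiv_comm _ _ _

lemma Nop_eq (k : ℕ) : ∀ (φ ψ : PolA n), Nop k φ ψ = Nr k φ ψ := by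
  induction k with
  | zero => intro φ ψ; simp [Nop, Nr_zero]
  | succ k ih =>
    intro φ ψ
    rw [Nr_succ, Nop, ← (Fin.snocEquiv (fun _ => Fin n)).sum_comp, Fintype.sum_prod_type]
    simp only [← ih, Nop, ← Finset.smul_sum, smul_smul]
    congr 1
    · rw [Nat.factorial_succ]; push_cast; rw [mul_inv]
    · apply sum_congr rfl; intro l _
      apply sum_congr rfl; intro α _
      simp only [List.ofFn_succ', List.concat_eq_append, List.foldr_append]
      simp [Fin.snocEquiv, dxi, du]

lemma Nr_xi (i : Fin n) (k : ℕ) : ∀ (φ ψ : PolA n),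
    Nr (k + 1) (X (Sum.inr i) * φ) ψ = X (Sum.inr i) * Nr (k + 1) φ ψ + Nr k φ (du i ψ) := by
  have hd : ∀ (l : Fin n) (φ : PolA n), dxi l (X (Sum.inr i) * φ) =
      X (Sum.inr i) * dxi l φ + if l = i then φ else 0 := by
    intro l φ
    classical
    simp [dxi, pderiv_X, Pi.single_apply, eq_comm]
  induction k with
  | zero =>
    intro φ ψ
    simp only [Nr_succ, hd, Nr_zero, add_mul, sum_add_distrib, ite_mul, zero_mul, mul_assoc]
    simp [← mul_sum]
  | succ k ih =>
    intro φ ψ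
    rw [Nr_succ]
    have : ∀ l, Nr (k + 1) (dxi l (X (Sum.inr i) * φ)) (du l ψ) =
        X (Sum.inr i) * Nr (k + 1) (dxi l φ) (du l ψ) + Nr k (dxi l φ) (du l (du i ψ)) +
        if l = i then Nr (k + 1) φ (du i ψ) else 0 := by
      intro l
      rw [hd, map_add, LinearMap.add_apply, ih, du_comm l i]
      split_ifs with h
      · rw [h]
      · rw [map_zero, LinearMap.zero_apply]
    simp only [this, sum_add_distrib, ← mul_sum]
    rw [Nr_succ (k + 1)]
    have e := Nr_succ k φ (du i ψ)
    have hk : (k : ℂ) + 1 ≠ 0 := by exact_mod_cast Nat.succ_ne_zero k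
    have hk2 : (k : ℂ) + 1 + 1 ≠ 0 := by exact_mod_cast Nat.succ_ne_zero (k + 1)
    have e2 : ∑ l, Nr k (dxi l φ) (du l (du i ψ)) = ((k : ℂ) + 1) • Nr (k + 1) φ (du i ψ) := by
      rw [e, smul_smul, mul_inv_cancel₀ hk, one_smul]
    rw [e2, smul_add, smul_add, mul_smul_comm, add_assoc]
    congr 1
    simp only [sum_ite_eq', mem_univ, if_true]
    rw [← smul_add]
    push_cast
    rw [show ((k : ℂ) + 1) • Nr (k + 1) φ (du i ψ) + Nr (k + 1) φ (du i ψ) =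
      ((k : ℂ) + 1 + 1) • Nr (k + 1) φ (du i ψ) by module, smul_smul, inv_mul_cancel₀ hk2, one_smul]

lemma Nr_u (i : Fin n) (k : ℕ) : ∀ (φ ψ : PolA n),
    Nr k (X (Sum.inl i) * φ) ψ = X (Sum.inl i) * Nr k φ ψ := by
  have hd : ∀ (l : Fin n) (φ : PolA n), dxi l (X (Sum.inl i) * φ) =
      X (Sum.inl i) * dxi l φ := by
    intro l φ
    classical
    simp [dxi, pderiv_X, Pi.single_apply]
  induction k with
  | zero => intro φ ψ; simp [Nr_zero, mul_assoc]
  | succ k ih =>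
    intro φ ψ
    simp only [Nr_succ, hd, ih, mul_smul_comm, mul_sum]

lemma Nr_du (i : Fin n) (k : ℕ) : ∀ (φ ψ : PolA n),
    du i (Nr k φ ψ) = Nr k (du i φ) ψ + Nr k φ (du i ψ) := by
  induction k with
  | zero => intro φ ψ; simp [Nr_zero, du]; ring
  | succ k ih =>
    intro φ ψ
    simp only [Nr_succ, map_smul, map_sum, ih, sum_add_distrib, smul_add, du_dxi, du_comm i]

lemma Nr_one (k : ℕ) (ψ : PolA n) : Nr k 1 ψ = if k = 0 then ψ else 0 := by
  cases k with
  | zero => simp [Nr_zero]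
  | succ k => rw [Nr_succ]; simp [dxi]

/-! ### Homogeneous coordinates -/

abbrev PB (n : ℕ) := MvPolynomial (Option (Fin n) ⊕ Option (Fin n)) ℂ

noncomputable def xv (a : Option (Fin n)) : PB n := X (Sum.inl a)
noncomputable def pv (a : Option (Fin n)) : PB n := X (Sum.inr a)
noncomputable def dX (a : Option (Fin n)) : Derivation ℂ (PB n) (PB n) := pderiv (Sum.inl a)
noncomputable def dP (a : Option (Fin n)) : Derivation ℂ (PB n) (PB n) := pderiv (Sum.inr a)

lemma dX_xv (a b : Option (Fin n)) : dX a (xv b) = if a = b then 1 else 0 := by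
  classical
  simp [dX, xv, pderiv_X, Pi.single_apply, eq_comm]
lemma dP_pv (a b : Option (Fin n)) : dP a (pv b) = if a = b then 1 else 0 := by
  classical
  simp [dP, pv, pderiv_X, Pi.single_apply, eq_comm]
lemma dX_pv (a b : Option (Fin n)) : dX a (pv b) = 0 := by
  classical
  simp [dX, pv, pderiv_X]
lemma dP_xv (a b : Option (Fin n)) : dP a (xv b) = 0 := by
  classical
  simp [dP, xv, pderiv_X]

lemma dX_dP (a b : Option (Fin n)) (P : PB n) : dX a (dP b P) = dP b (dX a P) := pderiv_comm _ _ _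
lemma dX_dX (a b : Option (Fin n)) (P : PB n) : dX a (dX b P) = dX b (dX a P) := pderiv_comm _ _ _
lemma dP_dP (a b : Option (Fin n)) (P : PB n) : dP a (dP b P) = dP b (dP a P) := pderiv_comm _ _ _

noncomputable def Th : PB n →ₐ[ℂ] PolA n :=
  aeval (Sum.elim (fun o => o.elim 1 (fun i => X (Sum.inl i)))
    (fun o => o.elim (-∑ k, X (Sum.inl k) * X (Sum.inr k)) (fun i => X (Sum.inr i))))

lemma Th_x0 : Th (xv (none : Option (Fin n))) = 1 := by simp [Th, xv]
lemma Th_x (i : Fin n) : Th (xv (some i)) = X (Sum.inl i) := by simp [Th, xv]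
lemma Th_p0 : Th (pv (none : Option (Fin n))) = -∑ k, X (Sum.inl k) * X (Sum.inr k) := by
  simp [Th, pv]
lemma Th_p (i : Fin n) : Th (pv (some i)) = X (Sum.inr i) := by simp [Th, pv]

lemma Th_C (r : ℂ) : Th (MvPolynomial.C r : PB n) = MvPolynomial.C r := by
  rw [Th, aeval_C]; rfl

lemma PB_ind {M : PB n → Prop} (P : PB n) (hC : ∀ r, M (MvPolynomial.C r)) (hadd : ∀ p q, M p → M q → M (p + q))
    (hx : ∀ p a, M p → M (p * xv a)) (hp : ∀ p a, M p → M (p * pv a)) : M P := by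
  induction P using MvPolynomial.induction_on with
  | C a => exact hC a
  | add p q h1 h2 => exact hadd p q h1 h2
  | mul_X p a h =>
    rcases a with a | a
    · exact hx p a h
    · exact hp p a h

lemma dxi_mul (i : Fin n) (a b : PolA n) : dxi i (a * b) = a * dxi i b + b * dxi i a := by
  simp [dxi]
lemma du_mul (i : Fin n) (a b : PolA n) : du i (a * b) = a * du i b + b * du i a := by
  simp [du]
lemma dxi_u (i j : Fin n) : dxi i (X (Sum.inl j) : PolA n) = 0 := by
  classical
  simp [dxi, pderiv_X]
lemma du_xi (i j : Fin n) : du i (X (Sum.inr j) : PolA n) = 0 := by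
  classical
  simp [du, pderiv_X]
lemma dxi_xi (i j : Fin n) : dxi i (X (Sum.inr j) : PolA n) = if i = j then 1 else 0 := by
  classical
  simp [dxi, pderiv_X, Pi.single_apply, eq_comm]
lemma du_u (i j : Fin n) : du i (X (Sum.inl j) : PolA n) = if i = j then 1 else 0 := by
  classical
  simp [du, pderiv_X, Pi.single_apply, eq_comm]
lemma dxi_one (i : Fin n) : dxi i (1 : PolA n) = 0 := by simp [dxi]
lemma du_one (i : Fin n) : du i (1 : PolA n) = 0 := by simp [du]

lemma dxi_Th (i : Fin n) (P : PB n) :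
    dxi i (Th P) = Th (dP (some i) P - xv (some i) * dP none P) := by
  induction P using PB_ind with
  | hC r => simp [Th_C, dxi, dP]
  | hadd p q h1 h2 => rw [map_add, map_add, h1, h2]; simp only [map_add, map_sub, map_mul]; ring
  | hx p a h =>
    have : dxi i (Th (xv a)) = 0 := by
      rcases a with _ | a
      · rw [Th_x0, dxi_one]
      · rw [Th_x, dxi_u]
    rw [map_mul, dxi_mul, h, this]
    simp only [Derivation.leibniz, dP_xv, smul_eq_mul, map_sub, map_mul, map_add, map_zero]
    ring
  | hp p a h =>
    have : dxi i (Th (pv a)) = Th (dP (some i) (pv a) - xv (some i) * dP none (pv a)) := by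
      rcases a with _ | a
      · rw [Th_p0, map_neg, map_sum]
        simp [dxi_mul, dxi_u, dxi_xi, dP_pv, Th_x]
      · rw [Th_p, dxi_xi]
        simp only [dP_pv, Option.some.injEq, reduceCtorEq, if_false, mul_zero, sub_zero]
        split_ifs <;> simp
    rw [map_mul, dxi_mul, h, this]
    simp only [Derivation.leibniz, smul_eq_mul, map_sub, map_mul, map_add]
    ring

lemma du_Th (i : Fin n) (P : PB n) :
    du i (Th P) = Th (dX (some i) P - pv (some i) * dP none P) := by
  induction P using PB_ind with
  | hC r => simp [Th_C, du, dP, dX]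
  | hadd p q h1 h2 => rw [map_add, map_add, h1, h2]; simp only [map_add, map_sub, map_mul]; ring
  | hx p a h =>
    have : du i (Th (xv a)) = Th (dX (some i) (xv a)) := by
      rcases a with _ | a
      · rw [Th_x0, du_one]; simp [dX_xv]
      · rw [Th_x, du_u]; simp only [dX_xv, Option.some.injEq]; split_ifs <;> simp
    rw [map_mul, du_mul, h, this]
    simp only [Derivation.leibniz, dP_xv, smul_eq_mul, map_sub, map_mul, map_add, map_zero]
    ring
  | hp p a h =>
    have : du i (Th (pv a)) = Th (dX (some i) (pv a) - pv (some i) * dP none (pv a)) := by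
      rcases a with _ | a
      · rw [Th_p0, map_neg, map_sum]
        simp [du_mul, du_u, du_xi, dP_pv, dX_pv, Th_p]
      · rw [Th_p, du_xi]
        simp [dP_pv, dX_pv]
    rw [map_mul, du_mul, h, this]
    simp only [Derivation.leibniz, smul_eq_mul, map_sub, map_mul, map_add]
    ring

noncomputable def Ex (P : PB n) : PB n := ∑ a, xv a * dX a P
noncomputable def Ep (P : PB n) : PB n := ∑ a, pv a * dP a P

def Bi (a b : ℂ) (P : PB n) : Prop := Ex P = a • P ∧ Ep P = b • P

lemma Ex_dP (c : Option (Fin n)) (P : PB n) : Ex (dP c P) = dP c (Ex P) := by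
  simp only [Ex, map_sum, Derivation.leibniz, dP_xv, mul_zero, add_zero, smul_eq_mul, dX_dP]
lemma Ep_dX (c : Option (Fin n)) (P : PB n) : Ep (dX c P) = dX c (Ep P) := by
  simp only [Ep, map_sum, Derivation.leibniz, dX_pv, mul_zero, add_zero, smul_eq_mul, dX_dP]
lemma Ex_dX (c : Option (Fin n)) (P : PB n) : Ex (dX c P) = dX c (Ex P) - dX c P := by
  simp only [Ex, map_sum, Derivation.leibniz, dX_xv, smul_eq_mul, dX_dX c, sum_add_distrib]
  simp
lemma Ep_dP (c : Option (Fin n)) (P : PB n) : Ep (dP c P) = dP c (Ep P) - dP c P := by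
  simp only [Ep, map_sum, Derivation.leibniz, dP_pv, smul_eq_mul, dP_dP c, sum_add_distrib]
  simp

lemma Bi.dX {a b : ℂ} {P : PB n} (h : Bi a b P) (c) : Bi (a - 1) b (dX c P) := by
  refine ⟨?_, ?_⟩
  · rw [Ex_dX, h.1, Derivation.map_smul, sub_smul, one_smul]
  · rw [Ep_dX, h.2, Derivation.map_smul]
lemma Bi.dP {a b : ℂ} {P : PB n} (h : Bi a b P) (c) : Bi a (b - 1) (dP c P) := by
  refine ⟨?_, ?_⟩
  · rw [Ex_dP, h.1, Derivation.map_smul]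
  · rw [Ep_dP, h.2, Derivation.map_smul, sub_smul, one_smul]

noncomputable def Lap : PB n →ₗ[ℂ] PB n := ∑ a, (dX a).toLinearMap ∘ₗ (dP a).toLinearMap
noncomputable def d0 : PB n →ₗ[ℂ] PB n := (dP none).toLinearMap

lemma Lap_apply (P : PB n) : Lap P = ∑ a, dX a (dP a P) := by
  simp [Lap, LinearMap.sum_apply]
lemma d0_apply (P : PB n) : d0 P = dP none P := rfl

lemma Bi.zero {a b : ℂ} : Bi a b (0 : PB n) := by simp [Bi, Ex, Ep]
lemma Bi.add {a b : ℂ} {P Q : PB n} (h : Bi a b P) (h' : Bi a b Q) : Bi a b (P + Q) := by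
  constructor
  · rw [smul_add, ← h.1, ← h'.1]; simp [Ex, mul_add, sum_add_distrib]
  · rw [smul_add, ← h.2, ← h'.2]; simp [Ep, mul_add, sum_add_distrib]
lemma Bi.smul {a b : ℂ} {P : PB n} (h : Bi a b P) (r : ℂ) : Bi a b (r • P) := by
  constructor
  · rw [smul_comm, ← h.1]; simp [Ex, smul_sum]
  · rw [smul_comm, ← h.2]; simp [Ep, smul_sum]
lemma Bi.sum {ι : Type*} {s : Finset ι} {a b : ℂ} {P : ι → PB n} (h : ∀ i ∈ s, Bi a b (P i)) :
    Bi a b (∑ i ∈ s, P i) :=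
  Finset.sum_induction P (Bi a b) (fun _ _ => Bi.add) Bi.zero h
lemma Bi.Lap {a b : ℂ} {P : PB n} (h : Bi a b P) : Bi (a - 1) (b - 1) (Lap P) := by
  rw [Lap_apply]
  exact Bi.sum (fun c _ => (h.dP c).dX c)
lemma Bi.d0 {a b : ℂ} {P : PB n} (h : Bi a b P) : Bi a (b - 1) (d0 P) := h.dP none

lemma Ex_mul (P Q : PB n) : Ex (P * Q) = P * Ex Q + Q * Ex P := by
  simp only [Ex, Derivation.leibniz, smul_eq_mul, mul_sum, ← sum_add_distrib]
  apply sum_congr rfl; intro i _; ring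
lemma Ep_mul (P Q : PB n) : Ep (P * Q) = P * Ep Q + Q * Ep P := by
  simp only [Ep, Derivation.leibniz, smul_eq_mul, mul_sum, ← sum_add_distrib]
  apply sum_congr rfl; intro i _; ring
lemma Ex_x (a : Option (Fin n)) : Ex (xv a) = xv a := by simp [Ex, dX_xv]
lemma Ex_p (a : Option (Fin n)) : Ex (pv a) = 0 := by simp [Ex, dX_pv]
lemma Ep_p (a : Option (Fin n)) : Ep (pv a) = pv a := by simp [Ep, dP_pv]
lemma Ep_x (a : Option (Fin n)) : Ep (xv a) = 0 := by simp [Ep, dP_xv]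

lemma Bi.xp {m : ℂ} {P : PB n} (h : Bi m m P) (a b : Option (Fin n)) :
    Bi (m + 1) (m + 1) (xv a * pv b * P) := by
  constructor
  · rw [Ex_mul, Ex_mul, Ex_x, Ex_p, h.1, add_smul, one_smul, mul_smul_comm]
    ring
  · rw [Ep_mul, Ep_mul, Ep_x, Ep_p, h.2, add_smul, one_smul, mul_smul_comm]
    ring

lemma Elin_Th {a b : ℂ} {P : PB n} (h : Bi a b P) : Elin n (Th P) = b • Th P := by
  have e : Elin n (Th P) = ∑ i, X (Sum.inr i) * dxi i (Th P) := by
    simp [Elin, LinearMap.sum_apply, dxi]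
  rw [e, ← map_smul, ← h.2, Ep, Fintype.sum_option]
  simp only [dxi_Th, map_add, map_sum, map_sub, map_mul, Th_p0, Th_x, Th_p, mul_sub, sum_sub_distrib]
  have : ∑ x, X (Sum.inr x) * (X (Sum.inl x) * Th (dP none P)) =
      (∑ k, X (Sum.inl k) * X (Sum.inr k)) * Th (dP none P) := by
    rw [sum_mul]
    apply sum_congr rfl; intro i _; ring
  rw [this]
  ring

lemma Dlin_Th {a b : ℂ} {P : PB n} (h : Bi a b P) :
    Dlin n (Th P) = Th (Lap P) - ((n : ℂ) + a + b - 1) • Th (d0 P) := by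
  have e : Dlin n (Th P) = ∑ i, du i (dxi i (Th P)) := by
    simp [Dlin, LinearMap.sum_apply, dxi, du]
  have h1 := h.d0.1
  have h2 := h.d0.2
  rw [Ex, Fintype.sum_option] at h1
  rw [Ep, Fintype.sum_option] at h2
  replace h1 := congrArg Th h1
  replace h2 := congrArg Th h2
  have h3 := Th_p0 (n := n)
  simp only [map_add, map_sum, map_mul, map_smul, Th_x, Th_p, Th_x0, d0_apply, one_mul] at h1 h2
  have hi : ∀ i, du i (dxi i (Th P)) = Th (dX (some i) (dP (some i) P)) - Th (dP none P)
      - X (Sum.inl i) * Th (dX (some i) (dP none P))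
      - X (Sum.inr i) * Th (dP (some i) (dP none P)) + X (Sum.inl i) * X (Sum.inr i) *
        Th (dP none (dP none P)) := by
    intro i
    rw [dxi_Th, du_Th]
    simp only [map_sub, Derivation.leibniz, smul_eq_mul, dX_xv, dP_xv, map_add, map_mul, Th_x, Th_p,
      dP_dP none (some i), if_true, map_one, map_zero]
    ring
  rw [e, sum_congr rfl (fun i _ => hi i)]
  simp only [sum_add_distrib, sum_sub_distrib, ← sum_mul, Lap_apply, Fintype.sum_option, map_add,
    map_sum, sum_const, card_univ, Fintype.card_fin, d0_apply]
  have hs : ∑ k, (X (Sum.inl k) * X (Sum.inr k) : PolA n) = - Th (pv none) := by rw [h3, neg_neg]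
  rw [hs, ← Nat.cast_smul_eq_nsmul ℂ]
  have e1 := eq_sub_of_add_eq' h1
  have e2 := eq_sub_of_add_eq' h2
  rw [e1, e2, neg_mul]
  module

/-! ### The space of bihomogeneous polynomials -/

inductive InS : ℕ → PB n → Prop
  | one : InS 0 1
  | zero (m : ℕ) : InS m 0
  | add {m : ℕ} {P Q : PB n} : InS m P → InS m Q → InS m (P + Q)
  | smul {m : ℕ} {P : PB n} (r : ℂ) : InS m P → InS m (r • P)
  | xp {m : ℕ} {P : PB n} (a b : Option (Fin n)) : InS m P → InS (m + 1) (xv a * pv b * P)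

lemma InS.bi {m : ℕ} {P : PB n} (h : InS m P) : Bi (m : ℂ) m P := by
  induction h with
  | one => simp [Bi, Ex, Ep]
  | zero m => exact Bi.zero
  | add _ _ h1 h2 => exact h1.add h2
  | smul r _ h => exact h.smul r
  | xp a b _ h => push_cast; exact h.xp a b

lemma InS.ite {m : ℕ} {P : PB n} (c : Prop) [Decidable c] (h : InS m P) :
    InS m (if c then P else 0) := by
  split_ifs
  · exact h
  · exact InS.zero m

lemma InS.xdX {m : ℕ} {P : PB n} (h : InS m P) (a b : Option (Fin n)) :
    InS m (xv a * dX b P) := by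
  induction h with
  | one => simpa using InS.zero 0
  | zero m => simpa using InS.zero m
  | add _ _ h1 h2 => rw [map_add, mul_add]; exact h1.add h2
  | smul r _ h => rw [Derivation.map_smul, mul_smul_comm]; exact h.smul r
  | @xp m P c d hP h =>
    have : xv a * dX b (xv c * pv d * P) = xv c * pv d * (xv a * dX b P) +
        if b = c then xv a * pv d * P else 0 := by
      simp only [Derivation.leibniz, smul_eq_mul, dX_xv, dX_pv]
      split_ifs <;> ring
    rw [this]
    exact (h.xp c d).add (InS.ite _ (hP.xp a d))

lemma InS.pdP {m : ℕ} {P : PB n} (h : InS m P) (a b : Option (Fin n)) :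
    InS m (pv a * dP b P) := by
  induction h with
  | one => simpa using InS.zero 0
  | zero m => simpa using InS.zero m
  | add _ _ h1 h2 => rw [map_add, mul_add]; exact h1.add h2
  | smul r _ h => rw [Derivation.map_smul, mul_smul_comm]; exact h.smul r
  | @xp m P c d hP h =>
    have : pv a * dP b (xv c * pv d * P) = xv c * pv d * (pv a * dP b P) +
        if b = d then xv c * pv a * P else 0 := by
      simp only [Derivation.leibniz, smul_eq_mul, dP_xv, dP_pv]
      split_ifs <;> ring
    rw [this]
    exact (h.xp c d).add (InS.ite _ (hP.xp c a))

lemma Lap_xp (a b : Option (Fin n)) (P : PB n) :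
    Lap (xv a * pv b * P) = xv a * pv b * Lap P + xv a * dX b P + pv b * dP a P +
      if a = b then P else 0 := by
  have : ∀ c, dX c (dP c (xv a * pv b * P)) = xv a * pv b * dX c (dP c P) +
      (if c = b then xv a * dX b P else 0) + (if c = a then pv b * dP a P else 0) +
      (if c = a then (if a = b then P else 0) else 0) := by
    intro c
    simp only [Derivation.leibniz, smul_eq_mul, dP_xv, dP_pv, map_add, dX_xv, dX_pv]
    by_cases h1 : c = b
    · subst h1
      by_cases h2 : c = a
      · subst h2; simp; ring
      · have h3 : ¬ a = c := fun h => h2 h.symm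
        simp [h2]
    · by_cases h2 : c = a
      · subst h2; simp [h1]; ring
      · simp [h1, h2]
  simp only [Lap_apply, this, sum_add_distrib, ← mul_sum]
  simp

lemma InS.Lap_aux {m : ℕ} {P : PB n} (h : InS m P) : InS (m - 1) (Lap P) ∧ (m = 0 → Lap P = 0) := by
  induction h with
  | one => simpa [Lap_apply] using InS.zero 0
  | zero m => simpa using InS.zero _
  | add _ _ h1 h2 =>
    rw [map_add]; exact ⟨h1.1.add h2.1, fun h => by rw [h1.2 h, h2.2 h, add_zero]⟩
  | smul r _ h => rw [map_smul]; exact ⟨h.1.smul r, fun h' => by rw [h.2 h', smul_zero]⟩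
  | @xp m P a b hP h =>
    refine ⟨?_, by simp⟩
    rw [Lap_xp, Nat.add_sub_cancel]
    refine ((InS.add ?_ (hP.xdX a b)).add (hP.pdP b a)).add (hP.ite _)
    cases m with
    | zero => rw [h.2 rfl, mul_zero]; exact InS.zero 0
    | succ m => exact h.1.xp a b

lemma InS.Lap_pow {m : ℕ} {P : PB n} (h : InS m P) (k : ℕ) : InS (m - k) ((Lap ^ k) P) := by
  induction k with
  | zero => simpa using h
  | succ k ih =>
    rw [pow_succ', Module.End.mul_apply, ← Nat.sub_sub]
    exact ih.Lap_aux.1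

lemma InS.mul {m m' : ℕ} {P P' : PB n} (h : InS m P) (h' : InS m' P') : InS (m + m') (P * P') := by
  induction h with
  | one => simpa using h'
  | zero m => simpa using InS.zero _
  | add _ _ h1 h2 => rw [add_mul]; exact h1.add h2
  | smul r _ h => rw [smul_mul_assoc]; exact h.smul r
  | @xp m P a b hP h => rw [mul_assoc, Nat.add_right_comm]; exact h.xp a b

lemma gen_mem (a b : Option (Fin n)) :
    Th (xv a) * Th (pv b) ∈ Algebra.adjoin ℂ (momSet n) := by
  have h1 : ∀ i : Fin n, (X (Sum.inr i) : PolA n) ∈ Algebra.adjoin ℂ (momSet n) := fun i =>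
    Algebra.subset_adjoin (Or.inl (Or.inl ⟨i, rfl⟩))
  have h2 : ∀ i j : Fin n, (X (Sum.inl i) * X (Sum.inr j) : PolA n) ∈
      Algebra.adjoin ℂ (momSet n) := fun i j =>
    Algebra.subset_adjoin (Or.inl (Or.inr ⟨(i, j), rfl⟩))
  have h3 : ∀ i : Fin n, (X (Sum.inl i) * ∑ k : Fin n, X (Sum.inl k) * X (Sum.inr k) : PolA n) ∈
      Algebra.adjoin ℂ (momSet n) := fun i =>
    Algebra.subset_adjoin (Or.inr ⟨i, rfl⟩)
  rcases a with _ | i <;> rcases b with _ | j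
  · rw [Th_x0, Th_p0, one_mul]
    exact neg_mem (sum_mem fun k _ => h2 k k)
  · rw [Th_x0, Th_p, one_mul]
    exact h1 j
  · rw [Th_x, Th_p0, mul_neg]
    exact neg_mem (h3 i)
  · rw [Th_x, Th_p]
    exact h2 i j

lemma InS.Th_mem {m : ℕ} {P : PB n} (h : InS m P) : Th P ∈ Algebra.adjoin ℂ (momSet n) := by
  induction h with
  | one => rw [map_one]; exact one_mem _
  | zero m => rw [map_zero]; exact zero_mem _
  | add _ _ h1 h2 => rw [map_add]; exact add_mem h1 h2
  | smul r _ h => rw [map_smul]; exact Subalgebra.smul_mem _ h r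
  | xp a b _ h => rw [map_mul, map_mul]; exact mul_mem (gen_mem a b) h

lemma mem_span_Th {φ : PolA n} (h : φ ∈ Algebra.adjoin ℂ (momSet n)) :
    φ ∈ Submodule.span ℂ {φ : PolA n | ∃ m P, InS m P ∧ Th P = φ} := by
  let W : Submonoid (PolA n) :=
    { carrier := {φ : PolA n | ∃ m P, InS m P ∧ Th P = φ}
      one_mem' := ⟨0, 1, InS.one, map_one _⟩
      mul_mem' := by
        rintro _ _ ⟨m, P, h, rfl⟩ ⟨m', P', h', rfl⟩
        exact ⟨m + m', P * P', h.mul h', map_mul _ _ _⟩ }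
  have h' : φ ∈ Subalgebra.toSubmodule (Algebra.adjoin ℂ (momSet n)) := h
  rw [Algebra.adjoin_eq_span] at h'
  refine Submodule.span_mono ?_ h'
  change (Submonoid.closure (momSet n) : Set (PolA n)) ⊆ W
  have hc : Submonoid.closure (momSet n) ≤ W := by
    rw [Submonoid.closure_le]
    have g : ∀ a b : Option (Fin n), InS 1 (xv a * pv b) := by
      intro a b
      simpa using InS.one.xp a b
    rintro _ ((⟨i, rfl⟩ | ⟨⟨i, j⟩, rfl⟩) | ⟨i, rfl⟩)
    · exact ⟨1, _, g none (some i), by rw [map_mul, Th_x0, Th_p, one_mul]⟩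
    · exact ⟨1, _, g (some i) (some j), by rw [map_mul, Th_x, Th_p]⟩
    · exact ⟨1, _, (g (some i) none).smul (-1), by
        rw [map_smul, map_mul, Th_x, Th_p0]; simp⟩
  exact hc

/-! ### Expansion of powers of `D` -/

noncomputable def Ac (x : ℂ) (k j : ℕ) : ℂ :=
  (-1) ^ j * dpp (x - k) j / ((k.factorial : ℂ) * j.factorial)

noncomputable def Y (P : PB n) (k j : ℕ) : PolA n := Th ((Lap ^ k) ((d0 ^ j) P))

lemma Lap_d0 : Commute (Lap : Module.End ℂ (PB n)) d0 := by
  apply LinearMap.ext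
  intro P
  simp only [Module.End.mul_apply, Lap_apply, d0_apply, map_sum]
  apply sum_congr rfl
  intro a _
  rw [← dX_dP, dP_dP]

lemma d0_Lap_pow (k j : ℕ) (P : PB n) : (d0 ^ j) ((Lap ^ k) P) = (Lap ^ k) ((d0 ^ j) P) := by
  rw [← Module.End.mul_apply, ← Module.End.mul_apply, (Lap_d0.pow_pow k j).eq]

lemma Bi_pow {m : ℂ} {P : PB n} (h : Bi m m P) (k j : ℕ) :
    Bi (m - k) (m - k - j) ((Lap ^ k) ((d0 ^ j) P)) := by
  rw [← d0_Lap_pow]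
  have h1 : Bi (m - k) (m - k) ((Lap ^ k) P) := by
    induction k with
    | zero => simpa using h
    | succ k ih =>
      rw [pow_succ', Module.End.mul_apply]
      have := ih.Lap
      push_cast
      rwa [← sub_sub]
  induction j with
  | zero => simpa using h1
  | succ j ih =>
    rw [pow_succ', Module.End.mul_apply]
    have := ih.d0
    push_cast
    rwa [← sub_sub (m - k)]

lemma Dlin_Y {m : ℂ} {P : PB n} (h : Bi m m P) (k j : ℕ) :
    Dlin n (Y P k j) = Y P (k + 1) j - (2 * m + n - 1 - 2 * k - j) • Y P k (j + 1) := by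
  rw [Y, Dlin_Th (Bi_pow h k j), Y, Y, pow_succ', Module.End.mul_apply, pow_succ' d0 j,
    Module.End.mul_apply]
  have : d0 ((Lap ^ k) ((d0 ^ j) P)) = (Lap ^ k) (d0 ((d0 ^ j) P)) := by
    simpa using d0_Lap_pow k 1 ((d0 ^ j) P)
  rw [this]
  congr 2
  ring

lemma Dpow_Th {m : ℂ} {P : PB n} (h : Bi m m P) (d : ℕ) :
    (Dlin n ^ d) (Th P) = (d.factorial : ℂ) • ∑ x ∈ antidiagonal d, Ac (2 * m + n) x.1 x.2 • Y P x.1 x.2 := by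
  induction d with
  | zero => simp [Ac, Y, dpp_zero]
  | succ d ih =>
    rw [pow_succ', Module.End.mul_apply, ih, map_smul, map_sum, Nat.factorial_succ]
    push_cast
    rw [mul_comm ((d : ℂ) + 1), mul_smul]
    congr 1
    simp only [map_smul, Dlin_Y h, smul_sub, sum_sub_distrib, smul_smul]
    set x := 2 * m + (n : ℂ) with hx
    let F1 : ℕ × ℕ → ℂ := fun y => match y.1 with
      | 0 => 0
      | k + 1 => Ac x k y.2
    let F2 : ℕ × ℕ → ℂ := fun y => match y.2 with
      | 0 => 0
      | j + 1 => Ac x y.1 j * (x - 1 - 2 * y.1 - j)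
    have hF : ∀ y ∈ antidiagonal (d + 1), ((d : ℂ) + 1) • Ac x y.1 y.2 • Y P y.1 y.2 =
        F1 y • Y P y.1 y.2 - F2 y • Y P y.1 y.2 := by
      rintro ⟨k, j⟩ hy
      have hy' : k + j = d + 1 := mem_antidiagonal.1 hy
      have hd : (d : ℂ) + 1 = k + j := by exact_mod_cast hy'.symm
      rw [smul_smul, ← sub_smul]
      congr 1
      rw [hd]
      have f : ∀ i : ℕ, (i.factorial : ℂ) ≠ 0 := fun i => by exact_mod_cast Nat.factorial_ne_zero i
      have f' : ∀ i : ℕ, (i : ℂ) + 1 ≠ 0 := fun i => by exact_mod_cast Nat.succ_ne_zero i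
      rcases k with _ | k <;> rcases j with _ | j
      · omega
      · simp only [F1, F2, Ac, dpp_succ, Nat.factorial_succ]
        have := f j; have := f' j
        push_cast
        field_simp
        ring
      · simp only [F1, F2, Ac, dpp_zero, Nat.factorial_succ]
        have := f k; have := f' k
        push_cast
        field_simp
        simp
      · simp only [F1, F2, Ac]
        rw [dpp_succ' (x - k), dpp_succ (x - (k + 1 : ℕ)), Nat.factorial_succ, Nat.factorial_succ]
        have := f k; have := f' k
        have := f j; have := f' j
        push_cast
        rw [show x - (k + 1 : ℂ) = x - k - 1 by ring]
        field_simp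
        ring
    rw [smul_sum, sum_congr rfl hF, sum_sub_distrib, Finset.Nat.sum_antidiagonal_succ]
    rw [Finset.Nat.sum_antidiagonal_succ' (f := fun y => F2 y • Y P y.1 y.2)]
    simp [F1, F2]

lemma Y_zero {m k j : ℕ} {P : PB n} (h : Bi (m : ℂ) m P) (hk : m < k + j) : Y P k j = 0 := by
  apply hom_neg hk
  rw [Y, Elin_Th (Bi_pow h k j)]
  push_cast
  rw [sub_sub]

lemma bh_Th (lam : ℂ) {m : ℕ} {P : PB n} (h : Bi (m : ℂ) m P) (p : ℕ) :
    bhL lam p (Th P) = ∑ x ∈ antidiagonal p,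
      (dS n lam m x.1 * tS (lam * (n + 1) + ((m - x.1 : ℕ) : ℂ)) x.2) • Y P x.1 x.2 := by
  rw [bhL, LinearMap.comp_apply]
  have h2 := Elin_Dpow (Elin_Th h) p
  by_cases hp : p ≤ m
  · have h2' : Elin n ((Dlin n ^ p) (Th P)) = ((m - p : ℕ) : ℂ) • (Dlin n ^ p) (Th P) := by
      rw [h2]; push_cast [hp]; rfl
    rw [cEL_hom h2', Dpow_Th h, smul_smul, smul_sum]
    apply sum_congr rfl
    rintro ⟨k, j⟩ hx
    have hx' : k + j = p := mem_antidiagonal.1 hx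
    subst hx'
    rw [← hS_split n lam m k j hp, smul_smul, Ac, mul_assoc]
    push_cast
    rfl
  · rw [hom_neg (by omega) h2, map_zero]
    symm
    apply sum_eq_zero
    rintro ⟨k, j⟩ hx
    have hx' : k + j = p := mem_antidiagonal.1 hx
    rw [Y_zero h (by omega), smul_zero]

/-! ### Formal series -/

abbrev Ser (n : ℕ) := ℕ → PolA n

noncomputable def shf (F : Ser n) : Ser n
  | 0 => 0
  | p + 1 => F p

noncomputable def sh : Ser n →ₗ[ℂ] Ser n where
  toFun := shf
  map_add' F G := by funext p; cases p <;> simp [shf]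
  map_smul' r F := by funext p; cases p <;> simp [shf]

lemma sh_zero (F : Ser n) : sh F 0 = 0 := rfl
lemma sh_succ (F : Ser n) (p : ℕ) : sh F (p + 1) = F p := rfl

noncomputable def mulS (a : PolA n) : Ser n →ₗ[ℂ] Ser n := (LinearMap.mulLeft ℂ a).compLeft ℕ
noncomputable def duS (i : Fin n) : Ser n →ₗ[ℂ] Ser n := (du i).compLeft ℕ

lemma mulS_apply (a : PolA n) (F : Ser n) (p : ℕ) : mulS a F p = a * F p := rfl
lemma duS_apply (i : Fin n) (F : Ser n) (p : ℕ) : duS i F p = du i (F p) := rfl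

lemma sh_mulS (a : PolA n) (F : Ser n) : sh (mulS a F) = mulS a (sh F) := by
  funext p; cases p <;> simp [sh_zero, sh_succ, mulS_apply]
lemma sh_duS (i : Fin n) (F : Ser n) : sh (duS i F) = duS i (sh F) := by
  funext p; cases p <;> simp [sh_zero, sh_succ, duS_apply]

noncomputable def T (x : ℂ) : PB n →ₗ[ℂ] Ser n where
  toFun P := fun j => tS x j • Th ((d0 ^ j) P)
  map_add' P Q := by funext j; simp
  map_smul' r P := by funext j; simp [smul_comm r]

lemma T_apply (x : ℂ) (P : PB n) (j : ℕ) : T x P j = tS x j • Th ((d0 ^ j) P) := rfl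

noncomputable def Lxi (i : Fin n) : Ser n →ₗ[ℂ] Ser n :=
  mulS (X (Sum.inr i)) + duS i ∘ₗ sh

lemma Lxi_eq (i : Fin n) (F : Ser n) : Lxi i F = mulS (X (Sum.inr i)) F + duS i (sh F) := rfl

noncomputable def ell (c : ℂ) : Option (Fin n) → Ser n →ₗ[ℂ] Ser n
  | none => -(∑ i, mulS (X (Sum.inl i)) ∘ₗ Lxi i) - c • sh
  | some i => Lxi i

noncomputable def gg (c : ℂ) (a b : Option (Fin n)) : Ser n →ₗ[ℂ] Ser n :=
  mulS (Th (xv a)) ∘ₗ ell c b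

lemma ell_none (c : ℂ) (F : Ser n) :
    ell c none F = -(∑ i, mulS (X (Sum.inl i)) (Lxi i F)) - c • sh F := by
  simp [ell, LinearMap.sum_apply]

lemma sh_Lxi (i : Fin n) (F : Ser n) : sh (Lxi i F) = Lxi i (sh F) := by
  rw [Lxi_eq, Lxi_eq, map_add, sh_mulS, sh_duS]

lemma sh_gg (c : ℂ) (a b : Option (Fin n)) (F : Ser n) : sh (gg c a b F) = gg c a b (sh F) := by
  rw [gg, LinearMap.comp_apply, LinearMap.comp_apply, sh_mulS]
  congr 1
  rcases b with _ | i
  · rw [ell_none, ell_none]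
    simp only [map_sub, map_neg, map_sum, map_smul, sh_mulS, sh_Lxi]
  · exact sh_Lxi i F

/-! ### The key identity -/

lemma d0_succ (j : ℕ) (P : PB n) : (d0 ^ (j + 1)) P = dP none ((d0 ^ j) P) := by
  rw [pow_succ', Module.End.mul_apply, d0_apply]

lemma d0_xdX (a b : Option (Fin n)) (j : ℕ) (P : PB n) :
    (d0 ^ j) (xv a * dX b P) = xv a * dX b ((d0 ^ j) P) := by
  induction j with
  | zero => rfl
  | succ j ih =>
    rw [d0_succ, ih, d0_succ, Derivation.leibniz, dP_xv, dX_dP]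
    simp

lemma d0_xp_some (a : Option (Fin n)) (i : Fin n) (j : ℕ) (P : PB n) :
    (d0 ^ j) (xv a * pv (some i) * P) = xv a * pv (some i) * (d0 ^ j) P := by
  induction j with
  | zero => rfl
  | succ j ih =>
    rw [d0_succ, ih, d0_succ, Derivation.leibniz, Derivation.leibniz, dP_xv, dP_pv]
    simp

lemma d0_xp_none (a : Option (Fin n)) (j : ℕ) (P : PB n) :
    (d0 ^ (j + 1)) (xv a * pv none * P) = xv a * pv none * (d0 ^ (j + 1)) P +
      ((j : ℂ) + 1) • (xv a * (d0 ^ j) P) := by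
  induction j with
  | zero =>
    rw [d0_succ, d0_succ, pow_zero, Module.End.one_apply, Derivation.leibniz, Derivation.leibniz,
      dP_xv, dP_pv, Module.End.one_apply]
    simp [mul_comm]
  | succ j ih =>
    rw [d0_succ, ih, map_add, Derivation.map_smul, Derivation.leibniz, Derivation.leibniz,
      Derivation.leibniz, dP_xv, dP_pv, d0_succ (j + 1) P, d0_succ j P]
    push_cast
    simp only [smul_eq_mul, if_true, mul_one, mul_zero, add_zero]
    rw [mul_comm _ (xv a), add_smul ((j : ℂ) + 1), one_smul, add_assoc,
      add_comm (xv a * _) (((j : ℂ) + 1) • _)]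

lemma u_du_Th {m m' : ℂ} {P : PB n} (h : Bi m m' P) :
    ∑ i, X (Sum.inl i) * du i (Th P) =
      m • Th P - Th (dX none P) + Th (pv none) * Th (dP none P) := by
  have h1 := congrArg Th h.1
  rw [Ex, Fintype.sum_option] at h1
  simp only [map_add, map_sum, map_mul, map_smul, Th_x, Th_x0, one_mul] at h1
  rw [← h1, Th_p0]
  simp only [du_Th, map_sub, map_mul, Th_p, mul_sub, sum_sub_distrib, neg_mul, sum_mul, mul_assoc]
  ring

lemma Bi_d0pow {m m' : ℂ} {P : PB n} (h : Bi m m' P) (j : ℕ) :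
    Bi m (m' - j) ((d0 ^ j) P) := by
  induction j with
  | zero => simpa using h
  | succ j ih =>
    rw [pow_succ', Module.End.mul_apply]
    have := ih.d0
    push_cast
    rwa [← sub_sub]

lemma gT (c : ℂ) {m : ℂ} {P : PB n} (h : Bi m m P) (a b : Option (Fin n)) :
    gg c a b (T (c + m) P) = T (c + m + 1) (xv a * pv b * P) + sh (T (c + m) (xv a * dX b P)) := by
  funext p
  rw [gg, LinearMap.comp_apply, mulS_apply, Pi.add_apply]
  rcases b with _ | i
  · rw [ell_none]
    rcases p with _ | j
    · simp [sh_zero, mulS_apply, Lxi_eq, duS_apply, T_apply, tS_zero, Th_p0, sum_mul, mul_assoc,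
        mul_sum]
    · have e1 := u_du_Th (Bi_d0pow h j)
      have e2 := tS_succ (c + m) j
      have e3 := tS_pascal (c + m) j
      have e4 : (∑ i, X (Sum.inl i) * X (Sum.inr i) : PolA n) = - Th (pv none) := by
        rw [Th_p0, neg_neg]
      have e5 : (-(∑ i, mulS (X (Sum.inl i)) (Lxi i (T (c + m) P))) - c • sh (T (c + m) P)) (j + 1)
          = -(tS (c + m) (j + 1) • ((∑ i, X (Sum.inl i) * X (Sum.inr i) : PolA n) * Th ((d0 ^ (j + 1)) P))
            + tS (c + m) j • ∑ i, X (Sum.inl i) * du i (Th ((d0 ^ j) P)))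
            - (c * tS (c + m) j) • Th ((d0 ^ j) P) := by
        simp only [Pi.sub_apply, Pi.neg_apply, Finset.sum_apply, mulS_apply, Lxi_eq, duS_apply,
          T_apply, sh_succ, Pi.add_apply, Pi.smul_apply, map_smul, mul_add, mul_smul_comm,
          sum_add_distrib, ← smul_sum, sum_mul, mul_assoc, smul_smul]
      rw [e5, e4, e1, T_apply, sh_succ, T_apply, d0_xp_none, d0_xdX]
      simp only [map_add, map_mul, map_smul]
      rw [smul_add (tS (c + m + 1) (j + 1)), smul_smul (tS (c + m + 1) (j + 1)),
        mul_comm (tS (c + m + 1) (j + 1)) ((j : ℂ) + 1), e2, e3, d0_succ]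
      simp only [smul_eq_C_mul, map_mul, map_add, map_sub, map_neg]
      ring
  · change Th (xv a) * Lxi i _ p = _
    rcases p with _ | j
    · simp [sh_zero, mulS_apply, Lxi_eq, duS_apply, T_apply, tS_zero, Th_p, mul_assoc]
    · rw [Lxi_eq, Pi.add_apply, mulS_apply, duS_apply, sh_succ, sh_succ, T_apply, T_apply, T_apply,
        T_apply, map_smul, du_Th, d0_xp_some, d0_xdX, tS_pascal, d0_succ]
      simp only [map_add, map_mul, map_smul, map_sub, Th_p]
      simp only [smul_eq_C_mul, map_mul, map_add, map_sub, map_neg]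
      ring

/-! ### The standard star product of series -/

noncomputable def inn (f : PolA n) (G : Ser n) (q : ℕ) : PolA n :=
  ∑ y ∈ antidiagonal q, Nr y.1 f (G y.2)

noncomputable def star : Ser n →ₗ[ℂ] Ser n →ₗ[ℂ] Ser n :=
  LinearMap.mk₂ ℂ (fun F G p => ∑ x ∈ antidiagonal p, inn (F x.1) G x.2)
    (by intro F F' G; funext p; simp [inn, sum_add_distrib])
    (by intro r F G; funext p; simp [inn, smul_sum])
    (by intro F G G'; funext p; simp [inn, sum_add_distrib])
    (by intro r F G; funext p; simp [inn, smul_sum])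

lemma star_apply (F G : Ser n) (p : ℕ) :
    star F G p = ∑ x ∈ antidiagonal p, inn (F x.1) G x.2 := rfl

lemma conv_sh (H : ℕ → Ser n) (p : ℕ) :
    ∑ x ∈ antidiagonal p, sh (H x.1) x.2 = sh (fun q => ∑ x ∈ antidiagonal q, H x.1 x.2) p := by
  cases p with
  | zero => simp [sh_zero]
  | succ p => rw [Finset.Nat.sum_antidiagonal_succ']; simp [sh_zero, sh_succ]

lemma star_sh_left (F G : Ser n) : star (sh F) G = sh (star F G) := by
  funext p
  cases p with
  | zero => simp [star_apply, sh_zero, inn]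
  | succ p =>
    rw [star_apply, Finset.Nat.sum_antidiagonal_succ, sh_succ, star_apply]
    simp [sh_zero, sh_succ, inn]

lemma inn_sh (f : PolA n) (G : Ser n) : inn f (sh G) = sh (inn f G) := by
  funext q
  cases q with
  | zero => simp [sh_zero, inn]
  | succ q =>
    rw [inn, Finset.Nat.sum_antidiagonal_succ', sh_succ, inn]
    simp [sh_zero, sh_succ]

lemma star_sh_right (F G : Ser n) : star F (sh G) = sh (star F G) := by
  funext p
  simp only [star_apply, inn_sh]
  exact conv_sh (fun i => inn (F i) G) p

lemma inn_xi (i : Fin n) (f : PolA n) (G : Ser n) (q : ℕ) :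
    inn (X (Sum.inr i) * f) G q = X (Sum.inr i) * inn f G q + sh (inn f (duS i G)) q := by
  cases q with
  | zero => simp [inn, sh_zero, Nr_zero, mul_assoc]
  | succ q =>
    rw [sh_succ, inn, inn, inn, Finset.Nat.sum_antidiagonal_succ, Finset.Nat.sum_antidiagonal_succ]
    simp only [Nr_xi, Nr_zero, sum_add_distrib, mul_add, ← mul_sum, duS_apply]
    ring

lemma star_xi (i : Fin n) (F G : Ser n) :
    star (mulS (X (Sum.inr i)) F) G = mulS (X (Sum.inr i)) (star F G) + sh (star F (duS i G)) := by
  funext p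
  simp only [star_apply, mulS_apply, inn_xi, sum_add_distrib, Pi.add_apply, ← mul_sum]
  congr 1
  exact conv_sh (fun k => inn (F k) (duS i G)) p

lemma star_u (i : Fin n) (F G : Ser n) :
    star (mulS (X (Sum.inl i)) F) G = mulS (X (Sum.inl i)) (star F G) := by
  funext p
  simp only [star_apply, mulS_apply, inn, Nr_u, ← mul_sum]

lemma star_du (i : Fin n) (F G : Ser n) :
    duS i (star F G) = star (duS i F) G + star F (duS i G) := by
  funext p
  simp only [star_apply, duS_apply, inn, map_sum, Nr_du, sum_add_distrib, Pi.add_apply]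

lemma star_Lxi (i : Fin n) (F G : Ser n) : star (Lxi i F) G = Lxi i (star F G) := by
  rw [Lxi_eq, Lxi_eq, map_add, LinearMap.add_apply, star_xi,
    ← star_sh_left, ← star_sh_left, star_du]
  abel

lemma mulS_one (F : Ser n) : mulS 1 F = F := by
  funext p; rw [mulS_apply, one_mul]

lemma star_gg (c : ℂ) (a b : Option (Fin n)) (F G : Ser n) :
    star (gg c a b F) G = gg c a b (star F G) := by
  have h1 : ∀ (a : Option (Fin n)) (F : Ser n),
      star (mulS (Th (xv a)) F) G = mulS (Th (xv a)) (star F G) := by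
    intro a F
    rcases a with _ | i
    · rw [Th_x0, mulS_one, mulS_one]
    · rw [Th_x, star_u]
  rw [gg, LinearMap.comp_apply, LinearMap.comp_apply, h1]
  congr 1
  rcases b with _ | i
  · rw [ell_none, ell_none]
    simp only [map_sub, map_neg, map_sum, map_smul, LinearMap.sub_apply, LinearMap.neg_apply,
      LinearMap.sum_apply, LinearMap.smul_apply, star_u, star_Lxi, star_sh_left]
  · exact star_Lxi i F G

lemma T_one (x : ℂ) (p : ℕ) : T x (1 : PB n) p = if p = 0 then 1 else 0 := by
  cases p with
  | zero => simp [T_apply, tS_zero]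
  | succ p =>
    rw [T_apply, pow_succ, Module.End.mul_apply, d0_apply]
    simp

lemma star_T_one (x : ℂ) (G : Ser n) : star (T x 1) G = G := by
  funext p
  rw [star_apply, Finset.sum_eq_single (0, p)]
  · rw [T_one, if_pos rfl, inn, Finset.sum_eq_single (0, p)]
    · simp [Nr_one]
    · rintro ⟨k, j⟩ hy hne
      have : k ≠ 0 := by
        rintro rfl
        exact hne (by simpa using hy)
      simp [Nr_one, this]
    · simp
  · rintro ⟨k, j⟩ hy hne
    have : k ≠ 0 := by
      rintro rfl
      exact hne (by simpa using hy)
    simp [T_one, this, inn]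
  · simp

/-! ### The invariant space of series -/

noncomputable def UU (n : ℕ) (c : ℂ) : Submodule ℂ (Ser n) :=
  Submodule.span ℂ {F : Ser n | ∃ (k m : ℕ) (P : PB n), InS m P ∧ F = (sh ^ k) (T (c + m) P)}

lemma UU_T (c : ℂ) {m : ℕ} {P : PB n} (h : InS m P) (k : ℕ) :
    (sh ^ k) (T (c + m) P) ∈ UU n c :=
  Submodule.subset_span ⟨k, m, P, h, rfl⟩

lemma UU_sh (c : ℂ) {F : Ser n} (h : F ∈ UU n c) : sh F ∈ UU n c := by
  induction h using Submodule.span_induction with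
  | mem F hF =>
    obtain ⟨k, m, P, hP, rfl⟩ := hF
    rw [← Module.End.mul_apply, ← pow_succ']
    exact UU_T c hP (k + 1)
  | zero => rw [map_zero]; exact zero_mem _
  | add F G _ _ h1 h2 => rw [map_add]; exact add_mem h1 h2
  | smul r F _ h => rw [map_smul]; exact Submodule.smul_mem _ r h

lemma UU_shpow (c : ℂ) {F : Ser n} (h : F ∈ UU n c) (k : ℕ) : (sh ^ k) F ∈ UU n c := by
  induction k with
  | zero => exact h
  | succ k ih => rw [pow_succ', Module.End.mul_apply]; exact UU_sh c ih

lemma shpow_gg (c : ℂ) (a b : Option (Fin n)) (F : Ser n) (k : ℕ) :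
    (sh ^ k) (gg c a b F) = gg c a b ((sh ^ k) F) := by
  induction k with
  | zero => rfl
  | succ k ih =>
    rw [pow_succ', Module.End.mul_apply, ih, sh_gg, Module.End.mul_apply]

lemma gT_nat (c : ℂ) {m : ℕ} {P : PB n} (h : InS m P) (a b : Option (Fin n)) :
    gg c a b (T (c + m) P) =
      T (c + (m + 1 : ℕ)) (xv a * pv b * P) + sh (T (c + m) (xv a * dX b P)) := by
  rw [gT c h.bi]
  push_cast
  rw [add_assoc]

lemma UU_gg (c : ℂ) (a b : Option (Fin n)) {F : Ser n} (h : F ∈ UU n c) :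
    gg c a b F ∈ UU n c := by
  induction h using Submodule.span_induction with
  | mem F hF =>
    obtain ⟨k, m, P, hP, rfl⟩ := hF
    rw [← shpow_gg, gT_nat c hP]
    exact UU_shpow c (add_mem (UU_T c (hP.xp a b) 0) (UU_sh c (UU_T c (hP.xdX a b) 0))) k
  | zero => rw [map_zero]; exact zero_mem _
  | add F G _ _ h1 h2 => rw [map_add]; exact add_mem h1 h2
  | smul r F _ h => rw [map_smul]; exact Submodule.smul_mem _ r h

lemma UU_star_T (c : ℂ) {G : Ser n} (hG : G ∈ UU n c) (m : ℕ) :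
    ∀ P : PB n, InS m P → star (T (c + m) P) G ∈ UU n c := by
  have key : ∀ (m : ℕ) (P : PB n), InS m P →
      (∀ m' < m, ∀ P : PB n, InS m' P → star (T (c + m') P) G ∈ UU n c) →
      star (T (c + m) P) G ∈ UU n c := by
    intro m P h
    induction h with
    | one => intro _; rw [star_T_one]; exact hG
    | zero m => intro _; rw [map_zero, map_zero]; exact zero_mem _
    | add _ _ h1 h2 =>
      intro h
      rw [map_add, map_add]; exact add_mem (h1 h) (h2 h)
    | smul r _ h1 =>
      intro h
      rw [map_smul, map_smul]; exact Submodule.smul_mem _ r (h1 h)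
    | @xp m P a b hP _ =>
      intro h
      rw [eq_sub_of_add_eq (gT_nat c hP a b).symm, map_sub, LinearMap.sub_apply, star_gg,
        star_sh_left]
      exact sub_mem (UU_gg c a b (h m (Nat.lt_succ_self m) P hP))
        (UU_sh c (h m (Nat.lt_succ_self m) _ (hP.xdX a b)))
  induction m using Nat.strong_induction_on with
  | _ m ih => exact fun P hP => key m P hP ih

lemma star_shpow_left (F G : Ser n) (k : ℕ) : star ((sh ^ k) F) G = (sh ^ k) (star F G) := by
  induction k with
  | zero => rfl
  | succ k ih =>
    rw [pow_succ', Module.End.mul_apply, star_sh_left, ih, Module.End.mul_apply]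

lemma UU_star (c : ℂ) {F G : Ser n} (hF : F ∈ UU n c) (hG : G ∈ UU n c) :
    star F G ∈ UU n c := by
  induction hF using Submodule.span_induction with
  | mem F hF =>
    obtain ⟨k, m, P, hP, rfl⟩ := hF
    rw [star_shpow_left]
    exact UU_shpow c (UU_star_T c hG m P hP) k
  | zero => rw [map_zero]; exact zero_mem _
  | add F F' _ _ h1 h2 => rw [map_add]; exact add_mem h1 h2
  | smul r F _ h => rw [map_smul]; exact Submodule.smul_mem _ r h

/-! ### The quantization map and its inverse -/

noncomputable def QQ (n : ℕ) (lam : ℂ) : PolA n →ₗ[ℂ] Ser n := LinearMap.pi (fun p => bhL lam p)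

lemma QQ_apply (lam : ℂ) (φ : PolA n) (p : ℕ) : QQ n lam φ p = bhL lam p φ := rfl

lemma shpow_apply (k : ℕ) (F : Ser n) (p : ℕ) :
    (sh ^ k) F p = if k ≤ p then F (p - k) else 0 := by
  induction k generalizing p with
  | zero => simp
  | succ k ih =>
    rw [pow_succ', Module.End.mul_apply]
    cases p with
    | zero => simp [sh_zero]
    | succ p => rw [sh_succ, ih]; simp

lemma QQ_Th (lam : ℂ) {m : ℕ} {P : PB n} (h : InS m P) :
    QQ n lam (Th P) = ∑ k ∈ range (m + 1),
      dS n lam m k • (sh ^ k) (T (lam * (n + 1) + ((m - k : ℕ) : ℂ)) ((Lap ^ k) P)) := by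
  funext p
  rw [QQ_apply, bh_Th lam h.bi, Finset.sum_apply]
  rw [Finset.Nat.sum_antidiagonal_eq_sum_range_succ_mk]
  have e : ∀ k, (dS n lam m k • (sh ^ k) (T (lam * (n + 1) + ((m - k : ℕ) : ℂ)) ((Lap ^ k) P))) p =
      if k ≤ p then (dS n lam m k * tS (lam * (n + 1) + ((m - k : ℕ) : ℂ)) (p - k)) • Y P k (p - k)
      else 0 := by
    intro k
    rw [Pi.smul_apply, shpow_apply]
    split_ifs
    · rw [T_apply, d0_Lap_pow, smul_smul, Y]
    · rw [smul_zero]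
  simp only [e]
  have h1 : ∑ k ∈ range (m + 1), (if k ≤ p then
      (dS n lam m k * tS (lam * (n + 1) + ((m - k : ℕ) : ℂ)) (p - k)) • Y P k (p - k) else 0) =
      ∑ k ∈ range (m + p + 1), (if k ≤ p then
      (dS n lam m k * tS (lam * (n + 1) + ((m - k : ℕ) : ℂ)) (p - k)) • Y P k (p - k) else 0) := by
    apply sum_subset (range_mono (by omega))
    intro k _ hk
    rw [mem_range] at hk
    rw [Y_zero h.bi (by omega), smul_zero, ite_self]
  have h2 : ∑ k ∈ range (p + 1), (if k ≤ p then
      (dS n lam m k * tS (lam * (n + 1) + ((m - k : ℕ) : ℂ)) (p - k)) • Y P k (p - k) else 0) =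
      ∑ k ∈ range (m + p + 1), (if k ≤ p then
      (dS n lam m k * tS (lam * (n + 1) + ((m - k : ℕ) : ℂ)) (p - k)) • Y P k (p - k) else 0) := by
    apply sum_subset (range_mono (by omega))
    intro k _ hk
    rw [mem_range] at hk
    rw [if_neg (by omega)]
  rw [h1, ← h2]
  apply sum_congr rfl
  intro k hk
  rw [mem_range] at hk
  rw [if_pos (by omega)]

lemma QQ_mem (lam : ℂ) {φ : PolA n} (h : φ ∈ Algebra.adjoin ℂ (momSet n)) :
    QQ n lam φ ∈ UU n (lam * (n + 1)) := by
  replace h := mem_span_Th h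
  induction h using Submodule.span_induction with
  | mem φ hφ =>
    obtain ⟨m, P, hP, rfl⟩ := hφ
    rw [QQ_Th lam hP]
    exact sum_mem fun k _ => Submodule.smul_mem _ _ (UU_T _ (hP.Lap_pow k) k)
  | zero => rw [map_zero]; exact zero_mem _
  | add F F' _ _ h1 h2 => rw [map_add]; exact add_mem h1 h2
  | smul r F _ h => rw [map_smul]; exact Submodule.smul_mem _ r h

lemma dS_zero (lam : ℂ) (m : ℕ) : dS n lam m 0 = 1 := by
  simp [dS, dpp_zero]

noncomputable def BB (n : ℕ) (lam : ℂ) : Ser n →ₗ[ℂ] Ser n where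
  toFun F := fun p => ∑ x ∈ antidiagonal p, bgL lam x.1 (F x.2)
  map_add' F G := by funext p; simp [sum_add_distrib]
  map_smul' r F := by funext p; simp [smul_sum]

lemma BB_apply (lam : ℂ) (F : Ser n) (p : ℕ) :
    BB n lam F p = ∑ x ∈ antidiagonal p, bgL lam x.1 (F x.2) := rfl

lemma BB_sh (lam : ℂ) (F : Ser n) : BB n lam (sh F) = sh (BB n lam F) := by
  funext p
  cases p with
  | zero => simp [BB_apply, sh_zero]
  | succ p =>
    rw [BB_apply, Finset.Nat.sum_antidiagonal_succ', sh_succ, BB_apply]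
    simp [sh_zero, sh_succ]

lemma BB_shpow (lam : ℂ) (F : Ser n) (k : ℕ) : BB n lam ((sh ^ k) F) = (sh ^ k) (BB n lam F) := by
  induction k with
  | zero => rfl
  | succ k ih =>
    rw [pow_succ', Module.End.mul_apply, BB_sh, ih, Module.End.mul_apply]

noncomputable def VV (n : ℕ) : Submodule ℂ (Ser n) where
  carrier := {F | ∀ p, F p ∈ Algebra.adjoin ℂ (momSet n)}
  add_mem' h1 h2 p := add_mem (h1 p) (h2 p)
  zero_mem' p := zero_mem _
  smul_mem' r F h p := Subalgebra.smul_mem _ (h p) r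

lemma VV_shpow {F : Ser n} (h : F ∈ VV n) (k : ℕ) : (sh ^ k) F ∈ VV n := by
  intro p
  rw [shpow_apply]
  split_ifs
  · exact h _
  · exact zero_mem _

lemma BB_QQ_Th (lam : ℂ) {m : ℕ} {P : PB n} (h : InS m P) : BB n lam (QQ n lam (Th P)) ∈ VV n := by
  intro p
  have := bg_bh lam (Elin_Th h.bi) p
  rw [BB_apply, ← Finset.Nat.sum_antidiagonal_swap]
  simp only [QQ_apply, Prod.fst_swap, Prod.snd_swap]
  rw [this]
  split_ifs
  · exact h.Th_mem
  · exact zero_mem _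

lemma BB_T (lam : ℂ) (m : ℕ) : ∀ P : PB n, InS m P →
    BB n lam (T (lam * (n + 1) + m) P) ∈ VV n := by
  induction m using Nat.strong_induction_on with
  | _ m ih =>
    intro P hP
    have h1 := QQ_Th lam hP
    rw [sum_range_succ', pow_zero, Module.End.one_apply, pow_zero, Module.End.one_apply,
      Nat.sub_zero, dS_zero, one_smul] at h1
    rw [eq_sub_of_add_eq' h1.symm, map_sub, map_sum]
    refine sub_mem (BB_QQ_Th lam hP) (sum_mem fun k hk => ?_)
    rw [mem_range] at hk
    rw [map_smul, BB_shpow]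
    exact Submodule.smul_mem _ _ (VV_shpow (ih _ (by omega) _ (hP.Lap_pow (k + 1))) _)

lemma BB_mem (lam : ℂ) {F : Ser n} (h : F ∈ UU n (lam * (n + 1))) : BB n lam F ∈ VV n := by
  induction h using Submodule.span_induction with
  | mem F hF =>
    obtain ⟨k, m, P, hP, rfl⟩ := hF
    rw [BB_shpow]
    exact VV_shpow (BB_T lam m P hP) k
  | zero => rw [map_zero]; exact zero_mem _
  | add F G _ _ h1 h2 => rw [map_add]; exact add_mem h1 h2
  | smul r F _ h => rw [map_smul]; exact Submodule.smul_mem _ r h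

lemma sum_range_ite_antidiagonal (f : ℕ → ℕ → PolA n) (p q : ℕ) (h : q ≤ p) :
    ∑ x ∈ antidiagonal q, f x.1 x.2 =
      ∑ i ∈ range (p + 1), ∑ j ∈ range (p + 1), if i + j = q then f i j else 0 := by
  rw [← sum_product', ← sum_filter]
  apply sum_congr _ (fun _ _ => rfl)
  ext ⟨i, j⟩
  simp only [HasAntidiagonal.mem_antidiagonal, mem_filter, mem_product, mem_range]
  omega

lemma C_eq (lam : ℂ) (p : ℕ) (φ ψ : PolA n) :
    LO.C n lam p φ ψ = BB n lam (star (QQ n lam φ) (QQ n lam ψ)) p := by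
  have e1 : ∀ q ≤ p, star (QQ n lam φ) (QQ n lam ψ) q = ∑ i ∈ range (p + 1), ∑ j ∈ range (p + 1),
      ∑ k ∈ range (p + 1), if i + j + k = q then Nr k (bhL lam i φ) (bhL lam j ψ) else 0 := by
    intro q hq
    rw [star_apply, sum_range_ite_antidiagonal (fun i s => inn (QQ n lam φ i) (QQ n lam ψ) s) p q hq]
    apply sum_congr rfl
    intro i _
    have : ∀ s ∈ range (p + 1), (if i + s = q then inn (QQ n lam φ i) (QQ n lam ψ) s else 0) =
        ∑ j ∈ range (p + 1), ∑ k ∈ range (p + 1), if i + s = q then (if k + j = s then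
          Nr k (bhL lam i φ) (bhL lam j ψ) else 0) else 0 := by
      intro s hs
      rw [mem_range] at hs
      split_ifs
      · rw [sum_comm]
        exact sum_range_ite_antidiagonal (fun k j => Nr k (bhL lam i φ) (bhL lam j ψ)) p s (by omega)
      · simp
    rw [sum_congr rfl this, sum_comm]
    apply sum_congr rfl
    intro j _
    rw [sum_comm]
    apply sum_congr rfl
    intro k _
    by_cases hh : i + j + k = q
    · rw [if_pos hh, sum_eq_single (k + j)]
      · rw [if_pos (by omega), if_pos rfl]
      · intro s _ hs
        rw [if_neg (fun h : k + j = s => hs h.symm), ite_self]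
      · intro hs
        rw [mem_range] at hs
        omega
    · rw [if_neg hh]
      apply sum_eq_zero
      intro s _
      split_ifs
      · omega
      · rfl
      · rfl
  rw [BB_apply, sum_range_ite_antidiagonal
    (fun m q => bgL lam m (star (QQ n lam φ) (QQ n lam ψ) q)) p p le_rfl]
  have e2 : ∀ m ∈ range (p + 1), (∑ q ∈ range (p + 1), if m + q = p then
      bgL lam m (star (QQ n lam φ) (QQ n lam ψ) q) else 0) =
      ∑ i ∈ range (p + 1), ∑ j ∈ range (p + 1), ∑ k ∈ range (p + 1),
        if i + j + k + m = p then bgL lam m (Nr k (bhL lam i φ) (bhL lam j ψ)) else 0 := by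
    intro m hm
    rw [mem_range] at hm
    rw [sum_eq_single (p - m), if_pos (by omega), e1 _ (by omega)]
    · simp only [map_sum]
      refine sum_congr rfl fun i _ => sum_congr rfl fun j _ => sum_congr rfl fun k _ => ?_
      split_ifs
      · rfl
      · omega
      · omega
      · rw [map_zero]
    · intro q _ hq
      rw [if_neg (by omega)]
    · intro h
      rw [mem_range] at h
      omega
  rw [sum_congr rfl e2, LO.C]
  simp only [bg_eq, bh_eq, Nop_eq]
  symm
  rw [sum_comm]
  refine sum_congr rfl fun i _ => ?_
  rw [sum_comm]
  refine sum_congr rfl fun j _ => ?_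
  rw [sum_comm]

lemma main_mem (lam : ℂ) (p : ℕ) (φ ψ : PolA n)
    (hφ : φ ∈ Algebra.adjoin ℂ (momSet n)) (hψ : ψ ∈ Algebra.adjoin ℂ (momSet n)) :
    LO.C n lam p φ ψ ∈ Algebra.adjoin ℂ (momSet n) := by
  rw [C_eq]
  exact BB_mem lam (UU_star _ (QQ_mem lam hφ) (QQ_mem lam hψ)) p

end LOP

/-- Proposition 3: `⋆_λ` restricts to the momentum algebra
`R = ℂ⟨momentum functions⟩`: all coefficients `C^λ_p(φ,ψ)` of `φ ⋆_λ ψ` lie in `R`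
whenever `φ, ψ ∈ R`. -/
theorem stmt_11 (n : ℕ) (hn : 1 ≤ n) (lam : ℂ) (p : ℕ) (φ ψ : PolA n)
    (hφ : φ ∈ Algebra.adjoin ℂ (LO.momSet n))
    (hψ : ψ ∈ Algebra.adjoin ℂ (LO.momSet n)) :
    LO.C n lam p φ ψ ∈ Algebra.adjoin ℂ (LO.momSet n) := by
  exact LOP.main_mem lam p φ ψ hφ hψ
end
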